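/- The minimum number of vertices of a finite planar k-regular simple graph of girth g equals 4 when (k,g)=(3,3), 8 when (k,g)=(3,4), 20 when (k,g)=(3,5), 6 when (k,g)=(4,3), and 12 when (k,g)=(5,3); these minima are attained by the graphs of the tetrahedron, the cube, the dodecahedron, the octahedron and the icosahedron, respectively. -/

import Mathlib

open SimpleGraph

/-- `H` is a minor of `G`: there is an assignment of pairwise disjoint connected
branch sets in `G` to the vertices of `H`, with an edge of `G` between the branch
sets of any two adjacent vertices of `H`. -/
def SimpleGraph.IsMinorOf {W V : Type*} (H : SimpleGraph W) (G : SimpleGraph V) : Prop :=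
  ∃ f : W → Set V,
    (∀ w, (G.induce (f w)).Connected) ∧
    (Pairwise fun w₁ w₂ => Disjoint (f w₁) (f w₂)) ∧
    ∀ ⦃w₁ w₂⦄, H.Adj w₁ w₂ → ∃ v₁ ∈ f w₁, ∃ v₂ ∈ f w₂, G.Adj v₁ v₂

/-- A graph is planar iff it has no `K₅` minor and no `K₃,₃` minor (Wagner's theorem). -/
def SimpleGraph.IsPlanar {V : Type*} (G : SimpleGraph V) : Prop :=
  ¬ (completeGraph (Fin 5)).IsMinorOf G ∧
    ¬ (completeBipartiteGraph (Fin 3) (Fin 3)).IsMinorOf G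

/-- A graph is outerplanar iff it has no `K₄` minor and no `K₂,₃` minor. -/
def SimpleGraph.IsOuterplanar {V : Type*} (G : SimpleGraph V) : Prop :=
  ¬ (completeGraph (Fin 4)).IsMinorOf G ∧
    ¬ (completeBipartiteGraph (Fin 2) (Fin 3)).IsMinorOf G

/-- The degree of a vertex, as the cardinality of its neighbour set. -/
noncomputable def SimpleGraph.degN {V : Type*} (G : SimpleGraph V) (v : V) : ℕ :=
  (G.neighborSet v).ncard

/-- An `({r,m};g)`-graph: girth `g`, every vertex has degree `r` or `m`, both occur. -/
def IsBigirthGraph {V : Type*} (G : SimpleGraph V) (r m g : ℕ) : Prop :=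
  G.girth = g ∧ (∀ v, G.degN v = r ∨ G.degN v = m) ∧
    (∃ v, G.degN v = r) ∧ (∃ v, G.degN v = m)

/-- The set of orders of finite planar `({r,m};g)`-graphs. -/
def bicageOrders (r m g : ℕ) : Set ℕ :=
  {n | ∃ (V : Type) (_ : Fintype V) (G : SimpleGraph V),
    G.IsPlanar ∧ IsBigirthGraph G r m g ∧ Fintype.card V = n}

/-- The set of orders of finite planar `k`-regular graphs of girth `g`. -/
def regOrders (k g : ℕ) : Set ℕ :=
  {n | ∃ (V : Type) (_ : Fintype V) (G : SimpleGraph V),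
    G.IsPlanar ∧ (∀ v, G.degN v = k) ∧ G.girth = g ∧ Fintype.card V = n}

/-- The tetrahedron graph `K₄`. -/
def tetrahedron : SimpleGraph (Fin 4) := completeGraph (Fin 4)

/-- The cube graph `Q₃` on `Fin 8`: vertices adjacent iff they differ in one bit. -/
def cubeGraph : SimpleGraph (Fin 8) :=
  SimpleGraph.fromRel (fun a b =>
    b.val = a.val ^^^ 1 ∨ b.val = a.val ^^^ 2 ∨ b.val = a.val ^^^ 4)

/-- The octahedron graph `K₂,₂,₂`, with parts `{i, i+3}`. -/
def octahedron : SimpleGraph (Fin 6) :=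
  SimpleGraph.fromRel (fun a b => a.val % 3 ≠ b.val % 3)

/-- The dodecahedron graph, as the generalized Petersen graph `GP(10,2)`. -/
def dodecahedron : SimpleGraph (Fin 20) :=
  SimpleGraph.fromRel (fun a b =>
    (a.val < 10 ∧ b.val < 10 ∧ b.val = (a.val + 1) % 10) ∨
    (a.val < 10 ∧ b.val = a.val + 10) ∨
    (10 ≤ a.val ∧ 10 ≤ b.val ∧ b.val = 10 + ((a.val - 10 + 2) % 10)))

/-- The icosahedron graph, as a gyroelongated pentagonal bipyramid: apexes `0` and `11`,
upper pentagon `1..5`, lower pentagon `6..10`. -/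
def icosahedron : SimpleGraph (Fin 12) :=
  SimpleGraph.fromRel (fun a b =>
    (a.val = 0 ∧ 1 ≤ b.val ∧ b.val ≤ 5) ∨
    (a.val = 11 ∧ 6 ≤ b.val ∧ b.val ≤ 10) ∨
    (1 ≤ a.val ∧ a.val ≤ 5 ∧ b.val = 1 + a.val % 5) ∨
    (6 ≤ a.val ∧ a.val ≤ 10 ∧ b.val = 6 + (a.val - 6 + 1) % 5) ∨
    (1 ≤ a.val ∧ a.val ≤ 5 ∧ b.val = a.val + 5) ∨
    (1 ≤ a.val ∧ a.val ≤ 5 ∧ b.val = 6 + a.val % 5))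


/-! ### Basic facts on minors -/

theorem conn_singleton {V : Type*} (G : SimpleGraph V) (x : V) :
    (G.induce {x}).Connected := by
  have : Nonempty ({x} : Set V) := ⟨⟨x, rfl⟩⟩
  refine ⟨fun a b => ?_⟩
  have : a = b := Subtype.ext (by rw [show a.1 = x from a.2, show b.1 = x from b.2])
  rw [this]

/-- Six branch sets giving a `K₃,₃` minor. -/
theorem k33_minor {V : Type*} (G : SimpleGraph V) (A B : Fin 3 → Set V)
    (hA : ∀ i, (G.induce (A i)).Connected) (hB : ∀ i, (G.induce (B i)).Connected)
    (hAA : ∀ i j, i ≠ j → Disjoint (A i) (A j)) (hBB : ∀ i j, i ≠ j → Disjoint (B i) (B j))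
    (hAB : ∀ i j, Disjoint (A i) (B j))
    (hE : ∀ i j, ∃ a ∈ A i, ∃ b ∈ B j, G.Adj a b) :
    (completeBipartiteGraph (Fin 3) (Fin 3)).IsMinorOf G := by
  refine ⟨Sum.elim A B, ?_, ?_, ?_⟩
  · rintro (i | i)
    · exact hA i
    · exact hB i
  · rintro (i | i) (j | j) hij
    · exact hAA i j (fun h => hij (by rw [h]))
    · exact hAB i j
    · exact (hAB j i).symm
    · exact hBB i j (fun h => hij (by rw [h]))
  · rintro (i | i) (j | j) hij
    · simp at hij
    · exact hE i j
    · obtain ⟨a, ha, b, hb, h⟩ := hE j i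
      exact ⟨b, hb, a, ha, h.symm⟩
    · simp at hij


/-! ### Girth -/

namespace GirthFacts

variable {V : Type*} {G : SimpleGraph V}

theorem cyc3 {a b c : V} (h1 : G.Adj a b) (h2 : G.Adj b c) (h3 : G.Adj c a) :
    ∃ w : G.Walk a a, w.IsCycle ∧ w.length = 3 := by
  refine ⟨.cons h1 (.cons h2 (.cons h3 .nil)), ?_, rfl⟩
  have n1 := h1.ne
  have n2 := h2.ne
  have n3 := h3.ne
  simp [Walk.cons_isCycle_iff, Walk.cons_isPath_iff]
  grind

theorem cyc4 {a b c d : V} (h1 : G.Adj a b) (h2 : G.Adj b c) (h3 : G.Adj c d) (h4 : G.Adj d a)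
    (hac : a ≠ c) (hbd : b ≠ d) :
    ∃ w : G.Walk a a, w.IsCycle ∧ w.length = 4 := by
  refine ⟨.cons h1 (.cons h2 (.cons h3 (.cons h4 .nil))), ?_, rfl⟩
  have n1 := h1.ne
  have n2 := h2.ne
  have n3 := h3.ne
  have n4 := h4.ne
  simp [Walk.cons_isCycle_iff, Walk.cons_isPath_iff]
  grind

theorem cyc5 {a b c d e : V} (h1 : G.Adj a b) (h2 : G.Adj b c) (h3 : G.Adj c d) (h4 : G.Adj d e)
    (h5 : G.Adj e a) (hn : [a, b, c, d, e].Nodup) :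
    ∃ w : G.Walk a a, w.IsCycle ∧ w.length = 5 := by
  refine ⟨.cons h1 (.cons h2 (.cons h3 (.cons h4 (.cons h5 .nil)))), ?_, rfl⟩
  simp at hn
  simp [Walk.cons_isCycle_iff, Walk.cons_isPath_iff]
  grind

theorem of_cyc3 {a : V} (w : G.Walk a a) (h : w.length = 3) :
    ∃ b c, G.Adj a b ∧ G.Adj b c ∧ G.Adj c a := by
  match w, h with
  | .cons h1 (.cons h2 (.cons h3 .nil)), _ => exact ⟨_, _, h1, h2, h3⟩

theorem of_cyc4 {a : V} (w : G.Walk a a) (hw : w.IsCycle) (h : w.length = 4) :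
    ∃ b c d, G.Adj a b ∧ G.Adj b c ∧ G.Adj c d ∧ G.Adj d a ∧ a ≠ c ∧ b ≠ d := by
  match w, hw, h with
  | .cons h1 (.cons h2 (.cons h3 (.cons h4 .nil))), hw, _ =>
    refine ⟨_, _, _, h1, h2, h3, h4, ?_⟩
    simp [Walk.cons_isCycle_iff, Walk.cons_isPath_iff] at hw
    grind

theorem of_cyc5 {a : V} (w : G.Walk a a) (hw : w.IsCycle) (h : w.length = 5) :
    ∃ b c d e, G.Adj a b ∧ G.Adj b c ∧ G.Adj c d ∧ G.Adj d e ∧ G.Adj e a ∧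
      [a, b, c, d, e].Nodup := by
  match w, hw, h with
  | .cons h1 (.cons h2 (.cons h3 (.cons h4 (.cons h5 .nil)))), hw, _ =>
    refine ⟨_, _, _, _, h1, h2, h3, h4, h5, ?_⟩
    simp [Walk.cons_isCycle_iff, Walk.cons_isPath_iff] at hw
    simp
    grind

theorem exists_cycle {g : ℕ} (h : G.girth = g) (hg : g ≠ 0) :
    ∃ (a : V) (w : G.Walk a a), w.IsCycle ∧ w.length = g := by
  have : ¬ G.IsAcyclic := fun h' => hg (by rw [← h]; exact girth_eq_zero.2 h')
  obtain ⟨a, w, hw, h'⟩ := exists_girth_eq_length.2 this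
  exact ⟨a, w, hw, by omega⟩

theorem no_tri (h : 4 ≤ G.girth) (a b c : V) (h1 : G.Adj a b) (h2 : G.Adj b c)
    (h3 : G.Adj c a) : False := by
  obtain ⟨w, hw, hl⟩ := cyc3 h1 h2 h3
  have := girth_le_length hw
  omega

theorem no_quad (h : 5 ≤ G.girth) (a b c d : V) (h1 : G.Adj a b) (h2 : G.Adj b c)
    (h3 : G.Adj c d) (h4 : G.Adj d a) (hac : a ≠ c) (hbd : b ≠ d) : False := by
  obtain ⟨w, hw, hl⟩ := cyc4 h1 h2 h3 h4 hac hbd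
  have := girth_le_length hw
  omega

theorem girth_ge {g : ℕ} {a : V} {w : G.Walk a a} (hw : w.IsCycle) (hl : w.length = g)
    (h : ∀ (b : V) (v : G.Walk b b), v.IsCycle → v.length < g → False) : G.girth = g := by
  have h1 := girth_le_length hw
  obtain ⟨b, v, hv, hlv⟩ := exists_girth_eq_length.2 (fun hac => hac w hw)
  by_contra hne
  exact h b v hv (by omega)

theorem girth_eq_three {a b c : V} (h1 : G.Adj a b) (h2 : G.Adj b c) (h3 : G.Adj c a) :
    G.girth = 3 := by
  obtain ⟨w, hw, hl⟩ := cyc3 h1 h2 h3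
  refine girth_ge hw hl fun b v hv hlt => ?_
  have := hv.three_le_length
  omega

theorem girth_eq_four {a b c d : V} (h1 : G.Adj a b) (h2 : G.Adj b c) (h3 : G.Adj c d)
    (h4 : G.Adj d a) (hac : a ≠ c) (hbd : b ≠ d)
    (ht : ∀ a b, G.Adj a b → ∀ c, G.Adj b c → G.Adj c a → False) :
    G.girth = 4 := by
  obtain ⟨w, hw, hl⟩ := cyc4 h1 h2 h3 h4 hac hbd
  refine girth_ge hw hl fun b v hv hlt => ?_
  have := hv.three_le_length
  obtain ⟨x, y, k1, k2, k3⟩ := of_cyc3 v (by omega)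
  exact ht _ _ k1 _ k2 k3

theorem girth_eq_five {a b c d e : V} (h1 : G.Adj a b) (h2 : G.Adj b c) (h3 : G.Adj c d)
    (h4 : G.Adj d e) (h5 : G.Adj e a) (hn : [a, b, c, d, e].Nodup)
    (ht : ∀ a b, G.Adj a b → ∀ c, G.Adj b c → G.Adj c a → False)
    (hq : ∀ a b, G.Adj a b → ∀ c, G.Adj b c → a ≠ c → ∀ d, G.Adj c d → G.Adj d a → b = d) :
    G.girth = 5 := by
  obtain ⟨w, hw, hl⟩ := cyc5 h1 h2 h3 h4 h5 hn
  refine girth_ge hw hl fun b v hv hlt => ?_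
  have := hv.three_le_length
  rcases (by omega : v.length = 3 ∨ v.length = 4) with h | h
  · obtain ⟨x, y, k1, k2, k3⟩ := of_cyc3 v h
    exact ht _ _ k1 _ k2 k3
  · obtain ⟨x, y, z, k1, k2, k3, k4, k5, k6⟩ := of_cyc4 v hv h
    exact k6 (hq _ _ k1 _ k2 k5 _ k3 k4)

end GirthFacts

/-! ### The solids: degrees and girths -/

instance : DecidableRel tetrahedron.Adj :=
  inferInstanceAs (DecidableRel (⊤ : SimpleGraph (Fin 4)).Adj)

instance : DecidableRel cubeGraph.Adj := by unfold cubeGraph; infer_instance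

instance : DecidableRel octahedron.Adj := by unfold octahedron; infer_instance

instance : DecidableRel dodecahedron.Adj := by unfold dodecahedron; infer_instance

instance : DecidableRel icosahedron.Adj := by unfold icosahedron; infer_instance

theorem degN_eq {V : Type*} [Fintype V] [DecidableEq V] (G : SimpleGraph V) [DecidableRel G.Adj]
    (v : V) : G.degN v = G.degree v := by
  rw [SimpleGraph.degN, Set.ncard_eq_toFinset_card', ← card_neighborFinset_eq_degree]
  rfl

theorem tet_deg : ∀ v, tetrahedron.degN v = 3 := by
  simp only [degN_eq]; decide +kernel

theorem cube_deg : ∀ v, cubeGraph.degN v = 3 := by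
  simp only [degN_eq]; decide +kernel

theorem dod_deg : ∀ v, dodecahedron.degN v = 3 := by
  simp only [degN_eq]; decide +kernel

theorem oct_deg : ∀ v, octahedron.degN v = 4 := by
  simp only [degN_eq]; decide +kernel

theorem ico_deg : ∀ v, icosahedron.degN v = 5 := by
  simp only [degN_eq]; decide +kernel

theorem tet_girth : tetrahedron.girth = 3 :=
  GirthFacts.girth_eq_three (a := 0) (b := 1) (c := 2) (by decide +kernel) (by decide +kernel)
    (by decide +kernel)

theorem oct_girth : octahedron.girth = 3 :=
  GirthFacts.girth_eq_three (a := 0) (b := 1) (c := 2) (by decide +kernel) (by decide +kernel)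
    (by decide +kernel)

theorem ico_girth : icosahedron.girth = 3 :=
  GirthFacts.girth_eq_three (a := 0) (b := 1) (c := 2) (by decide +kernel) (by decide +kernel)
    (by decide +kernel)

theorem cube_girth : cubeGraph.girth = 4 :=
  GirthFacts.girth_eq_four (a := 0) (b := 1) (c := 3) (d := 2) (by decide +kernel)
    (by decide +kernel) (by decide +kernel) (by decide +kernel) (by decide +kernel)
    (by decide +kernel) (by decide +kernel)

theorem dod_girth : dodecahedron.girth = 5 :=
  GirthFacts.girth_eq_five (a := 0) (b := 1) (c := 2) (d := 12) (e := 10) (by decide +kernel)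
    (by decide +kernel) (by decide +kernel) (by decide +kernel) (by decide +kernel)
    (by decide +kernel) (by decide +kernel) (by decide +kernel)

/-! ### A graph with at least three times its order minus five edges has a `K₅` or `K₃,₃` minor -/

namespace Mader

open Finset

/-- `H` has a minor model in `G` with all branch sets inside `S`. -/
def ModIn {W V : Type*} (H : SimpleGraph W) (G : SimpleGraph V) (S : Set V) : Prop :=
  ∃ f : W → Set V,
    (∀ w, (G.induce (f w)).Connected) ∧
    (Pairwise fun w₁ w₂ => Disjoint (f w₁) (f w₂)) ∧
    (∀ ⦃w₁ w₂⦄, H.Adj w₁ w₂ → ∃ v₁ ∈ f w₁, ∃ v₂ ∈ f w₂, G.Adj v₁ v₂) ∧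
    ∀ w, f w ⊆ S

variable {W V : Type*} {H : SimpleGraph W} {G G' : SimpleGraph V} {S S' : Set V}

theorem ModIn.isMinorOf (h : ModIn H G S) : H.IsMinorOf G := by
  obtain ⟨f, h1, h2, h3, _⟩ := h
  exact ⟨f, h1, h2, h3⟩

theorem ModIn.mono (h : ModIn H G S) (hG : G ≤ G') (hS : S ⊆ S') : ModIn H G' S' := by
  obtain ⟨f, h1, h2, h3, h4⟩ := h
  refine ⟨f, fun w => (h1 w).mono ?_, h2, ?_, fun w => (h4 w).trans hS⟩
  · intro a b hab
    exact hG hab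
  · intro w₁ w₂ hw
    obtain ⟨a, ha, b, hb, hab⟩ := h3 hw
    exact ⟨a, ha, b, hb, hG hab⟩

/-- Contracting the edge `uv` to `u`. -/
def contract (G : SimpleGraph V) (u v : V) : SimpleGraph V where
  Adj x y := (G.Adj x y ∧ x ≠ v ∧ y ≠ v) ∨ (x ≠ y ∧ x ≠ v ∧ y ≠ v ∧ x = u ∧ G.Adj v y) ∨
    (x ≠ y ∧ x ≠ v ∧ y ≠ v ∧ y = u ∧ G.Adj v x)
  symm := ⟨fun x y h => by
    rcases h with ⟨h, h1, h2⟩ | ⟨h0, h1, h2, h3, h4⟩ | ⟨h0, h1, h2, h3, h4⟩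
    · exact Or.inl ⟨h.symm, h2, h1⟩
    · exact Or.inr (Or.inr ⟨h0.symm, h2, h1, h3, h4⟩)
    · exact Or.inr (Or.inl ⟨h0.symm, h2, h1, h3, h4⟩)⟩
  loopless := ⟨fun x h => by
    rcases h with ⟨h, h1, h2⟩ | ⟨h0, h1, h2, h3, h4⟩ | ⟨h0, h1, h2, h3, h4⟩
    · exact G.loopless.irrefl _ h
    · exact h0 rfl
    · exact h0 rfl⟩

theorem conn_transfer {A B : Set V} (hA : (G'.induce A).Connected) (hAB : A ⊆ B)
    (hadj : ∀ x (hx : x ∈ A) y (hy : y ∈ A), G'.Adj x y →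
      (G.induce B).Reachable ⟨x, hAB hx⟩ ⟨y, hAB hy⟩)
    (hB : ∀ y (hy : y ∈ B), ∃ x, ∃ hx : x ∈ A, (G.induce B).Reachable ⟨x, hAB hx⟩ ⟨y, hy⟩) :
    (G.induce B).Connected := by
  obtain ⟨⟨r, hr⟩⟩ := hA.nonempty
  have key : ∀ a b : A, (G'.induce A).Reachable a b →
      (G.induce B).Reachable ⟨a.1, hAB a.2⟩ ⟨b.1, hAB b.2⟩ := by
    rintro a b ⟨w⟩
    induction w with
    | nil => exact Reachable.refl _
    | @cons x y z h _ ih => exact (hadj x.1 x.2 y.1 y.2 h).trans ih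
  have : Nonempty B := ⟨⟨r, hAB hr⟩⟩
  refine ⟨?_⟩
  intro x y
  obtain ⟨x', hx', hx⟩ := hB x.1 x.2
  obtain ⟨y', hy', hy⟩ := hB y.1 y.2
  exact (hx.symm.trans (key ⟨x', hx'⟩ ⟨y', hy'⟩ (hA.preconnected _ _))).trans hy

theorem ModIn.of_contract {u v : V} (huv : G.Adj v u) (h : ModIn H (contract G u v) S)
    (hvS : v ∉ S) : ModIn H G (insert v S) := by
  classical
  obtain ⟨f, h1, h2, h3, h4⟩ := h
  have hvf : ∀ w, v ∉ f w := fun w hw => hvS (h4 w hw)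
  have huniq : ∀ w w', u ∈ f w → u ∈ f w' → w = w' := by
    intro w w' hw hw'
    by_contra hne
    exact Set.disjoint_left.1 (h2 hne) hw hw'
  refine ⟨fun w => if u ∈ f w then insert v (f w) else f w, ?_, ?_, ?_, ?_⟩
  · intro w
    by_cases hu : u ∈ f w
    · have e : (if u ∈ f w then insert v (f w) else f w) = insert v (f w) := if_pos hu
      show (G.induce (if u ∈ f w then insert v (f w) else f w)).Connected
      rw [e]
      have hvu : (G.induce (insert v (f w))).Reachable ⟨u, Set.mem_insert_of_mem _ hu⟩
          ⟨v, Set.mem_insert _ _⟩ := Adj.reachable (by simpa using huv.symm)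
      have hv : ∀ y (hy : y ∈ f w), G.Adj v y → (G.induce (insert v (f w))).Reachable
          ⟨u, Set.mem_insert_of_mem _ hu⟩ ⟨y, Set.mem_insert_of_mem _ hy⟩ := fun y hy hvy =>
        hvu.trans (Adj.reachable (by simpa using hvy))
      refine conn_transfer (h1 w) (Set.subset_insert _ _) ?_ ?_
      · rintro x hx y hy (⟨h, -, -⟩ | ⟨-, -, -, rfl, h⟩ | ⟨-, -, -, rfl, h⟩)
        · exact Adj.reachable (by simpa using h)
        · exact hv y hy h
        · exact (hv x hx h).symm
      · intro y hy
        by_cases hyv : y = v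
        · subst hyv
          exact ⟨u, hu, hvu⟩
        · exact ⟨y, Set.mem_of_mem_insert_of_ne hy hyv, Reachable.refl _⟩
    · have e : (if u ∈ f w then insert v (f w) else f w) = f w := if_neg hu
      show (G.induce (if u ∈ f w then insert v (f w) else f w)).Connected
      rw [e]
      refine conn_transfer (h1 w) subset_rfl ?_ (fun y hy => ⟨y, hy, Reachable.refl _⟩)
      rintro x hx y hy (⟨h, -, -⟩ | ⟨-, -, -, rfl, h⟩ | ⟨-, -, -, rfl, h⟩)
      · exact Adj.reachable (by simpa using h)
      · exact absurd hx hu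
      · exact absurd hy hu
  · intro w w' hne
    have hd : Disjoint (f w) (f w') := h2 hne
    have a1 := hvf w
    have a2 := hvf w'
    have a3 := huniq w w'
    dsimp only
    rw [Set.disjoint_left] at hd ⊢
    intro x hx hx'
    split_ifs at hx hx' with hu hu' hu'
    · exact hne (a3 hu hu')
    · rcases hx with rfl | hx
      · exact a2 hx'
      · exact hd hx hx'
    · rcases hx' with rfl | hx'
      · exact a1 hx
      · exact hd hx hx'
    · exact hd hx hx'
  · intro w w' hw
    have hsub : ∀ w x, x ∈ f w → x ∈ (if u ∈ f w then insert v (f w) else f w) := by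
      intro w x hx
      split_ifs
      · exact Set.mem_insert_of_mem _ hx
      · exact hx
    have hvin : ∀ w, u ∈ f w → v ∈ (if u ∈ f w then insert v (f w) else f w) := by
      intro w hu
      rw [if_pos hu]
      exact Set.mem_insert _ _
    obtain ⟨x, hx, y, hy, h⟩ := h3 hw
    rcases h with ⟨h, -, -⟩ | ⟨-, -, -, rfl, h⟩ | ⟨-, -, -, rfl, h⟩
    · exact ⟨x, hsub _ _ hx, y, hsub _ _ hy, h⟩
    · exact ⟨v, hvin _ hx, y, hsub _ _ hy, h⟩
    · exact ⟨x, hsub _ _ hx, v, hvin _ hy, h.symm⟩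
  · intro w
    dsimp only
    split_ifs
    · exact Set.insert_subset_insert (h4 w)
    · exact (h4 w).trans (Set.subset_insert _ _)

/-- A clique on five vertices. -/
theorem k5_mod (x : Fin 5 → V) (hx : ∀ i j, i ≠ j → G.Adj (x i) (x j)) (hS : ∀ i, x i ∈ S) :
    ModIn (completeGraph (Fin 5)) G S := by
  refine ⟨fun i => {x i}, fun i => conn_singleton G _, ?_, ?_, by simpa using hS⟩
  · intro i j hij
    simpa using (hx i j hij).ne
  · intro i j hij
    exact ⟨_, rfl, _, rfl, hx i j hij⟩

theorem k33_mod (a b : Fin 3 → V) (ha : Function.Injective a) (hb : Function.Injective b)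
    (hab : ∀ i j, G.Adj (a i) (b j)) (hSa : ∀ i, a i ∈ S) (hSb : ∀ i, b i ∈ S) :
    ModIn (completeBipartiteGraph (Fin 3) (Fin 3)) G S := by
  refine ⟨fun i => {Sum.elim a b i}, fun i => conn_singleton G _, ?_, ?_, ?_⟩
  · rintro (i | i) (j | j) hij
    · simpa using fun h => hij (by rw [ha h])
    · simpa using (hab i j).ne
    · simpa using (hab j i).ne'
    · simpa using fun h => hij (by rw [hb h])
  · rintro (i | i) (j | j) hij
    · simp at hij
    · exact ⟨_, rfl, _, rfl, hab i j⟩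
    · exact ⟨_, rfl, _, rfl, (hab j i).symm⟩
    · simp at hij
  · rintro (i | i)
    · simpa using hSa i
    · simpa using hSb i

/-- A clique of size at least five. -/
theorem k5_of_clique {K : Finset V} (hK : G.IsClique (K : Set V)) (hc : 5 ≤ K.card)
    (hS : (K : Set V) ⊆ S) : ModIn (completeGraph (Fin 5)) G S := by
  obtain ⟨K', hK', hc'⟩ := Finset.exists_subset_card_eq hc
  let e := (K'.equivFinOfCardEq hc').symm
  refine k5_mod (fun i => (e i).1) (fun i j hij => ?_) (fun i => hS (hK' (e i).2))
  exact hK (hK' (e i).2) (hK' (e j).2) (fun h => hij (e.injective (Subtype.ext h)))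

/-- Number of edges. -/
noncomputable def ec (G : SimpleGraph V) : ℕ := G.edgeSet.ncard

theorem ec_eq (G : SimpleGraph V) [Fintype G.edgeSet] : G.edgeFinset.card = ec G := by
  rw [ec, Set.ncard_eq_toFinset_card', edgeFinset]

variable [Fintype V]

open Classical in
theorem mader_aux (n : ℕ) : ∀ (G : SimpleGraph V) (S : Finset V),
    S.card + ec G ≤ n → 3 ≤ S.card → (∀ x y, G.Adj x y → x ∈ S) →
    3 * S.card ≤ ec G + 5 →
    ModIn (completeGraph (Fin 5)) G S ∨
      ModIn (completeBipartiteGraph (Fin 3) (Fin 3)) G S := by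
  induction n with
  | zero => intro G S h1 h2; omega
  | succ n ih =>
    intro G S hn h3 hS hm
    have hS' : ∀ x y, G.Adj x y → y ∈ S := fun x y h => hS y x h.symm
    -- too many edges: delete one
    by_cases hlt : 3 * S.card < ec G + 5
    · have hpos : 0 < ec G := by omega
      rw [← ec_eq] at hpos
      obtain ⟨e, he⟩ := Finset.card_pos.1 hpos
      have hle : G.deleteEdges {e} ≤ G := deleteEdges_le _
      have hcard : ec (G.deleteEdges {e}) + 1 = ec G := by
        have : (G.deleteEdges {e}).edgeFinset = G.edgeFinset.erase e := by
          ext x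
          simp [and_comm]
        rw [← ec_eq, ← ec_eq, this, Finset.card_erase_add_one he]
      have := ih (G.deleteEdges {e}) S (by omega) h3 (fun x y h => hS x y (hle h)) (by omega)
      exact this.imp (fun h => h.mono hle subset_rfl) (fun h => h.mono hle subset_rfl)
    have hm' : 3 * S.card = ec G + 5 := by omega
    -- degree sum
    have hdeg0 : ∀ x, x ∉ S → G.degree x = 0 := by
      intro x hx
      rw [← card_neighborFinset_eq_degree, Finset.card_eq_zero, Finset.eq_empty_iff_forall_notMem]
      intro y hy
      exact hx (hS x y (by simpa using hy))
    have hsum : ∑ x ∈ S, G.degree x = 2 * ec G := by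
      rw [← ec_eq, ← sum_degrees_eq_twice_card_edges]
      exact Finset.sum_subset (Finset.subset_univ _) (fun x _ hx => hdeg0 x hx)
    have hnS : ∀ x, G.neighborFinset x ⊆ S.erase x := by
      intro x y hy
      have hy : G.Adj x y := by simpa using hy
      exact Finset.mem_erase.2 ⟨hy.ne', hS' _ _ hy⟩
    have hS4 : 4 ≤ S.card := by
      by_contra hlt4
      have hS3 : S.card = 3 := by omega
      have : ∑ x ∈ S, G.degree x ≤ ∑ x ∈ S, 2 := by
        refine Finset.sum_le_sum fun x hx => ?_
        have := Finset.card_le_card (hnS x)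
        rw [Finset.card_erase_of_mem hx, card_neighborFinset_eq_degree] at this
        omega
      rw [Finset.sum_const, smul_eq_mul] at this
      omega
    obtain ⟨v, hvS, hv⟩ : ∃ v ∈ S, G.degree v ≤ 5 := by
      by_contra! hcon
      have : ∑ x ∈ S, 6 ≤ ∑ x ∈ S, G.degree x := Finset.sum_le_sum fun x hx => hcon x hx
      rw [Finset.sum_const, smul_eq_mul] at this
      omega
    have hSe : (S.erase v).card + 1 = S.card := Finset.card_erase_add_one hvS
    have hdel := card_edgeFinset_deleteIncidenceSet G v
    rw [ec_eq, ec_eq] at hdel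
    have hdle : G.degree v ≤ ec G := by
      rw [← ec_eq, ← card_incidenceFinset_eq_degree]
      exact Finset.card_le_card (incidenceFinset_subset _ _)
    have hdadj : ∀ x y, (G.deleteIncidenceSet v).Adj x y ↔ G.Adj x y ∧ x ≠ v ∧ y ≠ v :=
      fun x y => deleteIncidenceSet_adj
    by_cases hd3 : G.degree v ≤ 3
    · have := ih (G.deleteIncidenceSet v) (S.erase v) (by omega) (by omega)
        (fun x y h => Finset.mem_erase.2 ⟨((hdadj x y).1 h).2.1, hS x y ((hdadj x y).1 h).1⟩)
        (by omega)
      have hle := G.deleteIncidenceSet_le v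
      have hss : ((S.erase v : Finset V) : Set V) ⊆ S := by
        exact_mod_cast Finset.erase_subset _ _
      exact this.imp (fun h => h.mono hle hss) (fun h => h.mono hle hss)
    by_cases hc : ∃ u, G.Adj v u ∧ (G.neighborFinset v ∩ G.neighborFinset u).card ≤ 2
    · obtain ⟨u, huv, hc⟩ := hc
      set N := G.neighborFinset v \ insert u (G.neighborFinset u) with hN
      have hNmem : ∀ x, x ∈ N ↔ G.Adj v x ∧ x ≠ u ∧ ¬ G.Adj u x := by
        intro x; simp [hN]
      have hNcard : G.degree v ≤ N.card + 1 + 2 := by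
        rw [← card_neighborFinset_eq_degree]
        have : G.neighborFinset v ⊆
            (N ∪ {u}) ∪ (G.neighborFinset v ∩ G.neighborFinset u) := by
          intro x hx
          have hx : G.Adj v x := by simpa using hx
          simp only [Finset.mem_union, hNmem, Finset.mem_singleton, Finset.mem_inter,
            mem_neighborFinset]
          tauto
        have h1 := Finset.card_le_card this
        have h2 := Finset.card_union_le (N ∪ {u}) (G.neighborFinset v ∩ G.neighborFinset u)
        have h3 := Finset.card_union_le N {u}
        rw [Finset.card_singleton] at h3
        omega
      have huN : ∀ x ∈ N, (contract G u v).Adj u x := by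
        intro x hx
        obtain ⟨h1, h2, h3⟩ := (hNmem x).1 hx
        exact Or.inr (Or.inl ⟨h2.symm, huv.ne', h1.ne', rfl, h1⟩)
      have hcon : (contract G u v).edgeFinset =
          (G.deleteIncidenceSet v).edgeFinset ∪ N.image (fun x => s(u, x)) := by
        ext e
        induction e with
        | h x y =>
          simp only [mem_edgeFinset, mem_edgeSet, Finset.mem_union, Finset.mem_image, hNmem, hdadj]
          constructor
          · rintro (h | ⟨h1, h2, h3, rfl, h4⟩ | ⟨h1, h2, h3, rfl, h4⟩)
            · exact Or.inl h
            · by_cases hxy : G.Adj x y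
              · exact Or.inl ⟨hxy, h2, h3⟩
              · exact Or.inr ⟨y, ⟨h4, h1.symm, hxy⟩, rfl⟩
            · by_cases hxy : G.Adj x y
              · exact Or.inl ⟨hxy, h2, h3⟩
              · exact Or.inr ⟨x, ⟨h4, h1, fun h => hxy h.symm⟩, Sym2.eq_swap⟩
          · rintro (h | ⟨z, hz, he⟩)
            · exact Or.inl h
            · have := huN z ((hNmem z).2 hz)
              rwa [← mem_edgeSet, he, mem_edgeSet] at this
      have hdisj : Disjoint (G.deleteIncidenceSet v).edgeFinset (N.image (fun x => s(u, x))) := by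
        rw [Finset.disjoint_left]
        intro e he he'
        obtain ⟨x, hx, rfl⟩ := Finset.mem_image.1 he'
        rw [mem_edgeFinset, mem_edgeSet, hdadj] at he
        exact ((hNmem x).1 hx).2.2 he.1
      have hccard : ec (contract G u v) =
          ec (G.deleteIncidenceSet v) + N.card := by
        rw [← ec_eq, ← ec_eq, hcon, Finset.card_union_of_disjoint hdisj, Finset.card_image_of_injective]
        intro x y hxy
        have hxy : x = y ∨ u = y ∧ x = u := by simpa using hxy
        rcases hxy with h | ⟨h, h'⟩
        · exact h
        · rw [h', h]
      have hNle : N.card + 1 ≤ G.degree v := by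
        rw [← card_neighborFinset_eq_degree]
        refine Finset.card_lt_card (Finset.ssubset_iff_subset_ne.2 ⟨Finset.sdiff_subset, ?_⟩)
        intro h
        have : u ∈ N := by rw [h]; simpa using huv
        exact ((hNmem u).1 this).2.1 rfl
      have := ih (contract G u v) (S.erase v) (by omega) (by omega)
        (by
          rintro x y (⟨h, h1, h2⟩ | ⟨h0, h1, h2, rfl, h4⟩ | ⟨h0, h1, h2, h3, h4⟩)
          · exact Finset.mem_erase.2 ⟨h1, hS _ _ h⟩
          · exact Finset.mem_erase.2 ⟨h1, hS' _ _ huv⟩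
          · exact Finset.mem_erase.2 ⟨h1, hS' _ _ h4⟩)
        (by omega)
      have hins : (insert v ((S.erase v : Finset V) : Set V)) = (S : Set V) := by
        rw [← Finset.coe_insert, Finset.insert_erase hvS]
      have hnot : v ∉ ((S.erase v : Finset V) : Set V) := by simp
      rw [← hins]
      exact this.imp (fun h => h.of_contract huv hnot) (fun h => h.of_contract huv hnot)
    -- the local case
    have hc' : ∀ u, G.Adj v u → 3 ≤ (G.neighborFinset v ∩ G.neighborFinset u).card := by
      intro u hu
      by_contra hlt
      exact hc ⟨u, hu, by omega⟩
    have hNS : ∀ x, G.Adj v x → x ∈ (S : Set V) := fun x hx => hS' _ _ hx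
    by_cases hcl : G.IsClique (G.neighborSet v)
    · left
      refine k5_of_clique (K := insert v (G.neighborFinset v)) ?_ ?_ ?_
      · rw [Finset.coe_insert, coe_neighborFinset, isClique_insert]
        exact ⟨hcl, fun b hb _ => hb⟩
      · rw [Finset.card_insert_of_notMem (by simp), card_neighborFinset_eq_degree]
        omega
      · intro x hx
        rw [Finset.coe_insert, coe_neighborFinset] at hx
        rcases hx with rfl | hx
        · exact hvS
        · exact hNS x hx
    · right
      simp only [IsClique, Set.Pairwise, mem_neighborSet, not_forall] at hcl
      obtain ⟨a, hva, b, hvb, hab, hnab⟩ := hcl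
      have hsub : ∀ x y, G.Adj v x → G.Adj v y → ¬ G.Adj x y →
          G.neighborFinset v ∩ G.neighborFinset x ⊆ ((G.neighborFinset v).erase x).erase y := by
        intro x y hx hy hxy z hz
        simp only [Finset.mem_inter, mem_neighborFinset] at hz
        simp only [Finset.mem_erase, mem_neighborFinset]
        exact ⟨fun h => hxy (h ▸ hz.2), hz.2.ne', hz.1⟩
      set T := ((G.neighborFinset v).erase a).erase b with hT
      have hTc : T.card + 2 = G.degree v := by
        have h1 : b ∈ (G.neighborFinset v).erase a := by simp [hab.symm, hvb]
        have h2 : a ∈ G.neighborFinset v := by simp [hva]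
        have := Finset.card_erase_add_one h1
        have := Finset.card_erase_add_one h2
        rw [← card_neighborFinset_eq_degree, hT]
        omega
      have ha := hsub a b hva hvb hnab
      have hb := hsub b a hvb hva (fun h => hnab h.symm)
      rw [Finset.erase_right_comm, ← hT] at hb
      rw [← hT] at ha
      have hTle := Finset.card_le_card ha
      have h3a := hc' a hva
      have h3b := hc' b hvb
      have ha' := Finset.eq_of_subset_of_card_le ha (by omega)
      have hb' := Finset.eq_of_subset_of_card_le hb (by omega)
      have hT3 : T.card = 3 := by omega
      let e := (T.equivFinOfCardEq hT3).symm
      have hTa : ∀ x ∈ T, G.Adj v x ∧ G.Adj a x := by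
        intro x hx; rw [← ha'] at hx; simpa using hx
      have hTb : ∀ x ∈ T, G.Adj v x ∧ G.Adj b x := by
        intro x hx; rw [← hb'] at hx; simpa using hx
      refine k33_mod ![a, b, v] (fun i => (e i).1) ?_ ?_ ?_ ?_ ?_
      · have := hva.ne
        have := hvb.ne
        intro i j
        fin_cases i <;> fin_cases j <;> simp <;> grind
      · intro i j hij
        exact e.injective (Subtype.ext hij)
      · intro i j
        fin_cases i
        · exact (hTa _ (e j).2).2
        · exact (hTb _ (e j).2).2
        · exact (hTa _ (e j).2).1
      · intro i
        fin_cases i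
        · exact hNS a hva
        · exact hNS b hvb
        · exact hvS
      · intro i
        exact hNS _ (hTa _ (e i).2).1

theorem mader (G : SimpleGraph V) [Fintype G.edgeSet] (h3 : 3 ≤ Fintype.card V)
    (hm : 3 * Fintype.card V ≤ G.edgeFinset.card + 5) : ¬ G.IsPlanar := by
  rw [ec_eq] at hm
  rintro ⟨h5, h33⟩
  rcases mader_aux _ G Finset.univ le_rfl h3 (by simp) hm with h | h
  · exact h5 h.isMinorOf
  · exact h33 h.isMinorOf

end Mader

/-! ### A certificate checker for cubic graphs of girth at least five -/

namespace CubicSearch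

/-- Neighbours of `u` in an edge list. -/
def nb : List (ℕ × ℕ) → ℕ → List ℕ
  | [], _ => []
  | (a, b) :: E, u =>
    bif Nat.beq a u then b :: nb E u else bif Nat.beq b u then a :: nb E u else nb E u

def memB (x : ℕ) : List ℕ → Bool
  | [] => false
  | y :: l => bif Nat.beq x y then true else memB x l

/-- Union of the lists of neighbours. -/
def nbs (E : List (ℕ × ℕ)) : List ℕ → List ℕ
  | [] => []
  | x :: l => nb E x ++ nbs E l

def bits : List ℕ → ℕ
  | [] => 0
  | x :: l => Nat.lor (2 ^ x) (bits l)

/-- `true` if the list has three distinct entries. -/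
def full : List ℕ → Bool
  | [a, b, c] => !(Nat.beq a b) && !(Nat.beq a c) && !(Nat.beq b c)
  | _ => false

/-- All `w < k` that are saturated. -/
def sat (E : List (ℕ × ℕ)) : ℕ → List ℕ
  | 0 => []
  | k + 1 => bif full (nb E k) then k :: sat E k else sat E k

/-- Vertices that cannot be further neighbours of `u`. -/
def excl (E F : List (ℕ × ℕ)) (k u : ℕ) : List ℕ :=
  u :: (nb F u ++ (sat E k ++ (nb E u ++ (nbs E (nb E u) ++ nbs E (nbs E (nb E u))))))

/-- connectedness certificate -/
def conn (E : List (ℕ × ℕ)) : List ℕ → Bool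
  | [] => false
  | x :: l => match l with
    | [] => true
    | _ :: _ => (nb E x).any (fun y => memB y l) && conn E l

def touch (E : List (ℕ × ℕ)) (A B : List ℕ) : Bool :=
  (nbs E A).any (fun y => memB y B)

def nodupB : List ℕ → Bool
  | [] => true
  | x :: l => !(memB x l) && nodupB l

def allLt (k : ℕ) : List ℕ → Bool
  | [] => true
  | x :: l => Nat.blt x k && allLt k l

/-- Certificate trees. -/
inductive Tr
  | s (u w : ℕ) (y n : Tr)
  | n (u : ℕ) (t : Tr)
  | d (u : ℕ)
  | k (a b c d e f : List ℕ)
  | p (i : ℕ) (σ : List ℕ)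

def nth : List ℕ → ℕ → ℕ
  | [], _ => 0
  | x :: _, 0 => x
  | _ :: l, i + 1 => nth l i

def edgesMap (E : List (ℕ × ℕ)) (σ : List ℕ) (k : ℕ) : List (ℕ × ℕ) → Bool
  | [] => true
  | (a, b) :: l =>
    Nat.blt a k && Nat.blt b k && memB (nth σ b) (nb E (nth σ a)) && edgesMap E σ k l

def chk (pats : List (ℕ × List (ℕ × ℕ))) : Tr → ℕ → List (ℕ × ℕ) → List (ℕ × ℕ) → Bool
  | .s u w y n, k, E, F =>
    Nat.blt u k && Nat.blt w k && chk pats y k ((u, w) :: E) F && chk pats n k E ((u, w) :: F)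
  | .n u t, k, E, F =>
    Nat.blt u k && Nat.blt (nb E u).length 3 && Nat.beq (bits (excl E F k u)) (2 ^ k - 1) &&
      chk pats t (k + 1) ((u, k) :: E) F
  | .d u, k, E, F =>
    Nat.blt u k && Nat.ble 18 k && Nat.blt (nb E u).length 3 &&
      Nat.beq (bits (excl E F k u)) (2 ^ k - 1)
  | .k a b c d e f, k, E, _ =>
    allLt k (a ++ (b ++ (c ++ (d ++ (e ++ f))))) && nodupB (a ++ (b ++ (c ++ (d ++ (e ++ f))))) &&
    (conn E a && conn E b && conn E c && conn E d && conn E e && conn E f) &&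
    (touch E a d && touch E a e && touch E a f) &&
    (touch E b d && touch E b e && touch E b f) &&
    (touch E c d && touch E c e && touch E c f)
  | .p i σ, k, E, _ =>
    match pats[i]? with
    | none => false
    | some (k', E') => Nat.beq σ.length k' && allLt k σ && nodupB σ && edgesMap E σ k' E'

end CubicSearch
namespace CubicSearch

theorem memB_iff (x : ℕ) (l : List ℕ) : memB x l = true ↔ x ∈ l := by
  induction l with
  | nil => simp [memB]
  | cons y l ih =>
    by_cases h : x = y
    · simp [memB, h]
    · have : Nat.beq x y = false := by
        rw [Bool.eq_false_iff]; intro h'; exact h (Nat.eq_of_beq_eq_true h')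
      simp [memB, this, ih, h]

theorem mem_nb (E : List (ℕ × ℕ)) (u x : ℕ) (h : x ∈ nb E u) : (u, x) ∈ E ∨ (x, u) ∈ E := by
  induction E with
  | nil => simp [nb] at h
  | cons p E ih =>
    obtain ⟨a, b⟩ := p
    rw [nb] at h
    by_cases h1 : Nat.beq a u = true
    · have := Nat.eq_of_beq_eq_true h1
      subst this
      simp only [h1, cond_true, List.mem_cons] at h
      rcases h with rfl | h
      · left; simp
      · rcases ih h with h | h <;> simp [h]
    · by_cases h2 : Nat.beq b u = true
      · have := Nat.eq_of_beq_eq_true h2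
        subst this
        simp only [h1, h2, cond_true, cond_false, List.mem_cons] at h
        rcases h with rfl | h
        · right; simp
        · rcases ih h with h | h <;> simp [h]
      · simp only [h1, h2, cond_false] at h
        rcases ih h with h | h <;> simp [h]

theorem mem_nbs (E : List (ℕ × ℕ)) (l : List ℕ) (x : ℕ) (h : x ∈ nbs E l) :
    ∃ y ∈ l, x ∈ nb E y := by
  induction l with
  | nil => simp [nbs] at h
  | cons a l ih =>
    rw [nbs, List.mem_append] at h
    rcases h with h | h
    · exact ⟨a, by simp, h⟩
    · obtain ⟨y, hy, hx⟩ := ih h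
      exact ⟨y, by simp [hy], hx⟩

theorem testBit_bits (l : List ℕ) (x : ℕ) (h : (bits l).testBit x = true) : x ∈ l := by
  induction l with
  | nil => simp [bits] at h
  | cons y l ih =>
    have h' : (2 ^ y ||| bits l).testBit x = true := h
    rw [Nat.testBit_or, Nat.testBit_two_pow] at h'
    simp only [Bool.or_eq_true, decide_eq_true_eq] at h'
    rcases h' with h' | h'
    · simp [h']
    · simp [ih h']

theorem full_spec (l : List ℕ) (h : full l = true) :
    ∃ a b c, l = [a, b, c] ∧ a ≠ b ∧ a ≠ c ∧ b ≠ c := by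
  unfold full at h
  split at h
  · rename_i a b c
    refine ⟨a, b, c, rfl, ?_, ?_, ?_⟩ <;> rintro rfl <;> simp at h
  · simp at h

theorem mem_sat (E : List (ℕ × ℕ)) (k x : ℕ) (h : x ∈ sat E k) : full (nb E x) = true := by
  induction k with
  | zero => simp [sat] at h
  | succ k ih =>
    rw [sat] at h
    by_cases h1 : full (nb E k) = true
    · simp only [h1, cond_true, List.mem_cons] at h
      rcases h with rfl | h
      · exact h1
      · exact ih h
    · simp only [h1, cond_false] at h
      exact ih h

theorem allLt_spec (k : ℕ) (l : List ℕ) (h : allLt k l = true) : ∀ x ∈ l, x < k := by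
  induction l with
  | nil => simp
  | cons y l ih =>
    simp only [allLt, Bool.and_eq_true] at h
    intro x hx
    rcases List.mem_cons.1 hx with rfl | hx
    · exact Nat.le_of_ble_eq_true h.1
    · exact ih h.2 x hx

theorem nodupB_spec (l : List ℕ) (h : nodupB l = true) : l.Nodup := by
  induction l with
  | nil => simp
  | cons y l ih =>
    simp only [nodupB, Bool.and_eq_true, Bool.not_eq_true'] at h
    rw [List.nodup_cons]
    refine ⟨fun hm => ?_, ih h.2⟩
    rw [(memB_iff y l).2 hm] at h
    simp at h

theorem nth_eq (l : List ℕ) (i : ℕ) (h : i < l.length) : nth l i = l[i] := by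
  induction l generalizing i with
  | nil => simp at h
  | cons x l ih =>
    cases i with
    | zero => rfl
    | succ i => simpa [nth] using ih i (by simpa using h)

/-- A realization of a partial graph inside `G`. -/
structure Realizes {V : Type*} (G : SimpleGraph V) (φ : ℕ → V) (k : ℕ)
    (E F : List (ℕ × ℕ)) : Prop where
  inj : ∀ i < k, ∀ j < k, φ i = φ j → i = j
  edges : ∀ p ∈ E, p.1 < k ∧ p.2 < k ∧ G.Adj (φ p.1) (φ p.2)
  nonedges : ∀ p ∈ F, ¬ G.Adj (φ p.1) (φ p.2)

variable {V : Type*} {G : SimpleGraph V} {φ : ℕ → V} {k : ℕ} {E F : List (ℕ × ℕ)}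

theorem Realizes.nb_spec (h : Realizes G φ k E F) {u x : ℕ} (hx : x ∈ nb E u) :
    x < k ∧ u < k ∧ G.Adj (φ u) (φ x) := by
  rcases mem_nb E u x hx with h' | h'
  · obtain ⟨h1, h2, h3⟩ := h.edges _ h'
    exact ⟨h2, h1, h3⟩
  · obtain ⟨h1, h2, h3⟩ := h.edges _ h'
    exact ⟨h1, h2, h3.symm⟩

theorem Realizes.conn_spec (h : Realizes G φ k E F) (l : List ℕ) (hl : conn E l = true) :
    (G.induce (φ '' {x | x ∈ l})).Connected := by
  induction l with
  | nil => simp [conn] at hl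
  | cons x l ih =>
    cases l with
    | nil =>
      have : φ '' {y | y ∈ [x]} = {φ x} := by ext; simp [eq_comm]
      rw [this]
      exact conn_singleton G _
    | cons z l =>
      simp only [conn, Bool.and_eq_true, List.any_eq_true] at hl
      obtain ⟨⟨y, hy, hy2⟩, hl⟩ := hl
      have hc := ih hl
      rw [memB_iff] at hy2
      have hadj := (h.nb_spec hy).2.2
      have : φ '' {y | y ∈ x :: z :: l} = φ '' {y | y ∈ z :: l} ∪ {φ x} := by
        ext v; simp only [List.mem_cons, Set.mem_image, Set.mem_ofPred_eq, Set.mem_union,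
          Set.mem_singleton_iff]
        constructor
        · rintro ⟨w, rfl | hw, rfl⟩
          · right; rfl
          · left; exact ⟨w, hw, rfl⟩
        · rintro (⟨w, hw, rfl⟩ | rfl)
          · exact ⟨w, Or.inr hw, rfl⟩
          · exact ⟨x, Or.inl rfl, rfl⟩
      rw [this]
      exact SimpleGraph.connected_induce_union hc.preconnected
        (conn_singleton G (φ x)).preconnected (Set.mem_image_of_mem φ hy2) rfl hadj.symm


theorem Realizes.touch_spec (h : Realizes G φ k E F) (A B : List ℕ) (ht : touch E A B = true) :
    ∃ a ∈ φ '' {x | x ∈ A}, ∃ b ∈ φ '' {x | x ∈ B}, G.Adj a b := by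
  simp only [touch, List.any_eq_true] at ht
  obtain ⟨y, hy, hyB⟩ := ht
  rw [memB_iff] at hyB
  obtain ⟨x, hx, hxy⟩ := mem_nbs E A y hy
  exact ⟨φ x, ⟨x, hx, rfl⟩, φ y, ⟨y, hyB, rfl⟩, (h.nb_spec hxy).2.2⟩

theorem Realizes.disj_spec (h : Realizes G φ k E F) (A B : List ℕ)
    (hA : ∀ x ∈ A, x < k) (hB : ∀ x ∈ B, x < k) (hd : ∀ x ∈ A, x ∉ B) :
    Disjoint (φ '' {x | x ∈ A}) (φ '' {x | x ∈ B}) := by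
  rw [Set.disjoint_left]
  rintro _ ⟨x, hx, rfl⟩ ⟨y, hy, hxy⟩
  have : y = x := h.inj y (hB y hy) x (hA x hx) hxy
  subst this
  exact hd y hx hy

theorem Realizes.k33 (h : Realizes G φ k E F) (a b c d e f : List ℕ)
    (hk : chk pats (.k a b c d e f) k E F = true) :
    (completeBipartiteGraph (Fin 3) (Fin 3)).IsMinorOf G := by
  simp only [chk, Bool.and_eq_true] at hk
  obtain ⟨⟨⟨⟨⟨hlt, hnd⟩, ⟨⟨⟨⟨⟨ca, cb⟩, cc⟩, cd⟩, ce⟩, cf⟩⟩, ⟨⟨ad, ae⟩, af⟩⟩, ⟨⟨bd, be⟩, bf⟩⟩, ⟨⟨cd', ce'⟩, cf'⟩⟩ := hk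
  have hlt := allLt_spec _ _ hlt
  have hnd := nodupB_spec _ hnd
  simp only [List.nodup_append, List.mem_append] at hnd hlt
  refine k33_minor G ![φ '' {x | x ∈ a}, φ '' {x | x ∈ b}, φ '' {x | x ∈ c}]
    ![φ '' {x | x ∈ d}, φ '' {x | x ∈ e}, φ '' {x | x ∈ f}] ?_ ?_ ?_ ?_ ?_ ?_
  · intro i; fin_cases i
    · exact h.conn_spec a ca
    · exact h.conn_spec b cb
    · exact h.conn_spec c cc
  · intro i; fin_cases i
    · exact h.conn_spec d cd
    · exact h.conn_spec e ce
    · exact h.conn_spec f cf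
  · intro i j hij; fin_cases i <;> fin_cases j <;> first
      | exact absurd rfl hij
      | (refine h.disj_spec _ _ ?_ ?_ ?_ <;> intro x hx <;> grind)
  · intro i j hij; fin_cases i <;> fin_cases j <;> first
      | exact absurd rfl hij
      | (refine h.disj_spec _ _ ?_ ?_ ?_ <;> intro x hx <;> grind)
  · intro i j; fin_cases i <;> fin_cases j <;>
      (refine h.disj_spec _ _ ?_ ?_ ?_ <;> intro x hx <;> grind)
  · intro i j; fin_cases i <;> fin_cases j <;> apply h.touch_spec <;> assumption

/-- The ambient hypotheses: cubic, no triangle, no four-cycle. -/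
structure Cubic5 (G : SimpleGraph V) : Prop where
  reg : ∀ v, (G.neighborSet v).ncard = 3
  tri : ∀ a b c, G.Adj a b → G.Adj b c → G.Adj c a → False
  quad : ∀ a b c d, G.Adj a b → G.Adj b c → G.Adj c d → G.Adj d a → a ≠ c → b ≠ d → False

/-- An excluded vertex is not a further neighbour. -/
theorem Realizes.excl_spec (h : Realizes G φ k E F) (hG : Cubic5 G) {u w : ℕ} (hu : u < k)
    (hw : w < k) (hx : w ∈ excl E F k u) (hadj : G.Adj (φ u) (φ w)) : w ∈ nb E u ∨ u ∈ nb E w := by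
  by_contra hcon
  push Not at hcon
  obtain ⟨hcon, hcon'⟩ := hcon
  simp only [excl, List.mem_cons, List.mem_append] at hx
  rcases hx with rfl | hx | hx | hx | hx | hx
  · exact G.loopless.irrefl _ hadj
  · rcases mem_nb _ _ _ hx with h' | h'
    · exact h.nonedges _ h' hadj
    · exact h.nonedges _ h' hadj.symm
  · obtain ⟨a, b, c, hl, hab, hac, hbc⟩ := full_spec _ (mem_sat _ _ _ hx)
    have ha : a ∈ nb E w := by simp [hl]
    have hb : b ∈ nb E w := by simp [hl]
    have hc : c ∈ nb E w := by simp [hl]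
    have ha' := h.nb_spec ha
    have hb' := h.nb_spec hb
    have hc' := h.nb_spec hc
    have hsub : ({φ a, φ b, φ c} : Set V) ⊆ G.neighborSet (φ w) := by
      rintro x (rfl | rfl | rfl)
      · exact ha'.2.2
      · exact hb'.2.2
      · exact hc'.2.2
    have hcard : ({φ a, φ b, φ c} : Set V).ncard = 3 := by
      apply Set.ncard_eq_three.2
      exact ⟨_, _, _, fun h' => hab (h.inj _ ha'.1 _ hb'.1 h'),
        fun h' => hac (h.inj _ ha'.1 _ hc'.1 h'), fun h' => hbc (h.inj _ hb'.1 _ hc'.1 h'), rfl⟩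
    have hfin : (G.neighborSet (φ w)).Finite := by
      apply Set.finite_of_ncard_ne_zero; rw [hG.reg]; simp
    have heq := Set.eq_of_subset_of_ncard_le hsub (by rw [hG.reg, hcard]) hfin
    have : φ u ∈ ({φ a, φ b, φ c} : Set V) := by rw [heq]; exact hadj.symm
    rcases this with h' | h' | h'
    · exact hcon' (h.inj _ hu _ ha'.1 h' ▸ ha)
    · exact hcon' (h.inj _ hu _ hb'.1 h' ▸ hb)
    · exact hcon' (h.inj _ hu _ hc'.1 h' ▸ hc)
  · exact hcon hx
  · obtain ⟨y, hy, hyw⟩ := mem_nbs _ _ _ hx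
    exact hG.tri _ _ _ (h.nb_spec hy).2.2 (h.nb_spec hyw).2.2 hadj.symm
  · obtain ⟨y, hy, hyw⟩ := mem_nbs _ _ _ hx
    obtain ⟨z, hz, hzy⟩ := mem_nbs _ _ _ hy
    have h1 := h.nb_spec hz
    have h2 := h.nb_spec hzy
    have h3 := h.nb_spec hyw
    refine hG.quad (φ u) (φ z) (φ y) (φ w) h1.2.2 h2.2.2 h3.2.2 hadj.symm ?_ ?_
    · intro h'
      have := h.inj _ hu _ h2.1 h'
      subst this
      exact hcon hyw
    · intro h'
      have := h.inj _ h1.1 _ hw h'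
      subst this
      exact hcon hz

theorem Realizes.exists_new (h : Realizes G φ k E F) (hG : Cubic5 G) {u : ℕ} (hu : u < k)
    (hlen : Nat.blt (nb E u).length 3 = true)
    (hbits : Nat.beq (bits (excl E F k u)) (2 ^ k - 1) = true)
    (hnbsymm : ∀ w, u ∈ nb E w → w ∈ nb E u) :
    ∃ x, G.Adj (φ u) x ∧ ∀ i < k, φ i ≠ x := by
  have hlen : (nb E u).length < 3 := Nat.le_of_ble_eq_true hlen
  have hbits := Nat.eq_of_beq_eq_true hbits
  classical
  have hex : ∃ x ∈ G.neighborSet (φ u), x ∉ (((nb E u).map φ).toFinset : Set V) := by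
    by_contra hcon
    push Not at hcon
    have := Set.ncard_le_ncard (s := G.neighborSet (φ u)) hcon (Finset.finite_toSet _)
    rw [hG.reg, Set.ncard_coe_finset] at this
    have h2 := List.toFinset_card_le ((nb E u).map φ)
    rw [List.length_map] at h2
    omega
  obtain ⟨x, hx, hxn⟩ := hex
  refine ⟨x, hx, ?_⟩
  rintro w hw rfl
  have hmem : w ∈ excl E F k u := by
    apply testBit_bits
    rw [hbits, Nat.testBit_two_pow_sub_one]
    simpa using hw
  have : w ∈ nb E u := (h.excl_spec hG hu hw hmem hx).elim id (hnbsymm w)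
  apply hxn
  simp only [List.coe_toFinset, List.mem_map, Set.mem_ofPred_eq]
  exact ⟨w, this, rfl⟩

theorem mem_nb_of (E : List (ℕ × ℕ)) (u x : ℕ) (h : (u, x) ∈ E ∨ (x, u) ∈ E) : x ∈ nb E u := by
  induction E with
  | nil => simp at h
  | cons p E ih =>
    obtain ⟨a, b⟩ := p
    rw [nb]
    by_cases h1 : a = u
    · subst h1
      simp only [Nat.beq_refl, cond_true, List.mem_cons]
      simp only [List.mem_cons, Prod.mk.injEq, true_and] at h
      grind
    · by_cases h2 : b = u
      · subst h2
        have hb : Nat.beq a b = false := by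
          rw [Bool.eq_false_iff]; intro h'; exact h1 (Nat.eq_of_beq_eq_true h')
        simp only [hb, Nat.beq_refl, cond_true, cond_false, List.mem_cons]
        simp only [List.mem_cons, Prod.mk.injEq] at h
        grind
      · have hb : Nat.beq a u = false := by
          rw [Bool.eq_false_iff]; intro h'; exact h1 (Nat.eq_of_beq_eq_true h')
        have hb' : Nat.beq b u = false := by
          rw [Bool.eq_false_iff]; intro h'; exact h2 (Nat.eq_of_beq_eq_true h')
        simp only [hb, hb', cond_false]
        simp only [List.mem_cons, Prod.mk.injEq] at h
        grind

theorem nb_symm (E : List (ℕ × ℕ)) (u w : ℕ) (h : u ∈ nb E w) : w ∈ nb E u :=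
  mem_nb_of E u w (mem_nb E w u h).symm

theorem edgesMap_spec (σ : List ℕ) (k' : ℕ) (l : List (ℕ × ℕ)) (h : edgesMap E σ k' l = true) :
    ∀ p ∈ l, p.1 < k' ∧ p.2 < k' ∧ nth σ p.2 ∈ nb E (nth σ p.1) := by
  induction l with
  | nil => simp
  | cons q l ih =>
    obtain ⟨a, b⟩ := q
    simp only [edgesMap, Bool.and_eq_true, memB_iff] at h
    intro p hp
    rcases List.mem_cons.1 hp with rfl | hp
    · exact ⟨Nat.le_of_ble_eq_true h.1.1.1, Nat.le_of_ble_eq_true h.1.1.2, h.1.2⟩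
    · exact ih h.2 p hp

/-- A pattern that cannot occur in `G`. -/
def Refuted (G : SimpleGraph V) (p : ℕ × List (ℕ × ℕ)) : Prop :=
  ∀ φ, ¬ Realizes G φ p.1 p.2 []

theorem Realizes.extend (h : Realizes G φ k E F) {u : ℕ} (hu : u < k) {x : V}
    (hx : G.Adj (φ u) x) (hn : ∀ i < k, φ i ≠ x) (hF : ∀ p ∈ F, p.1 < k ∧ p.2 < k) :
    Realizes G (fun i => if i = k then x else φ i) (k + 1) ((u, k) :: E) F := by
  refine ⟨?_, ?_, ?_⟩
  · intro i hi j hj hij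
    split_ifs at hij with h1 h2 h2
    · omega
    · exact absurd hij.symm (hn j (by omega))
    · exact absurd hij (hn i (by omega))
    · exact h.inj i (by omega) j (by omega) hij
  · intro p hp
    rcases List.mem_cons.1 hp with rfl | hp
    · refine ⟨by dsimp only; omega, by dsimp only; omega, ?_⟩
      have : u ≠ k := by omega
      simpa [this] using hx
    · obtain ⟨h1, h2, h3⟩ := h.edges p hp
      refine ⟨by omega, by omega, ?_⟩
      have h1' : p.1 ≠ k := by omega
      have h2' : p.2 ≠ k := by omega
      simpa [h1', h2'] using h3
  · intro p hp
    obtain ⟨h1, h2⟩ := hF p hp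
    have h1' : p.1 ≠ k := by omega
    have h2' : p.2 ≠ k := by omega
    simpa [h1', h2'] using h.nonedges p hp

theorem sound [Fintype V] (hG : Cubic5 G) (hcard : Fintype.card V ≤ 18)
    (hK : ¬ (completeBipartiteGraph (Fin 3) (Fin 3)).IsMinorOf G)
    (pats : List (ℕ × List (ℕ × ℕ))) (hp : ∀ p ∈ pats, Refuted G p) (t : Tr) :
    ∀ (k : ℕ) (E F : List (ℕ × ℕ)), chk pats t k E F = true → (∀ p ∈ F, p.1 < k ∧ p.2 < k) →
      ∀ φ, ¬ Realizes G φ k E F := by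
  induction t with
  | s u w y n ihy ihn =>
    intro k E F hc hF φ h
    simp only [chk, Bool.and_eq_true] at hc
    obtain ⟨⟨⟨hu, hw⟩, hy⟩, hn⟩ := hc
    have hu : u < k := Nat.le_of_ble_eq_true hu
    have hw : w < k := Nat.le_of_ble_eq_true hw
    by_cases hadj : G.Adj (φ u) (φ w)
    · refine ihy k _ F hy hF φ ⟨h.inj, ?_, h.nonedges⟩
      intro p hp
      rcases List.mem_cons.1 hp with rfl | hp
      · exact ⟨hu, hw, hadj⟩
      · exact h.edges p hp
    · refine ihn k E _ hn ?_ φ ⟨h.inj, h.edges, ?_⟩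
      · intro p hp
        rcases List.mem_cons.1 hp with rfl | hp
        · exact ⟨hu, hw⟩
        · exact hF p hp
      · intro p hp
        rcases List.mem_cons.1 hp with rfl | hp
        · exact hadj
        · exact h.nonedges p hp
  | n u t ih =>
    intro k E F hc hF φ h
    simp only [chk, Bool.and_eq_true] at hc
    obtain ⟨⟨⟨hu, hl⟩, hb⟩, hc⟩ := hc
    have hu : u < k := Nat.le_of_ble_eq_true hu
    obtain ⟨x, hx, hn⟩ := h.exists_new hG hu hl hb (fun w => nb_symm E u w)
    refine ih (k + 1) _ F hc ?_ _ (h.extend hu hx hn hF)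
    intro p hp
    have := hF p hp
    omega
  | d u =>
    intro k E F hc hF φ h
    simp only [chk, Bool.and_eq_true] at hc
    obtain ⟨⟨⟨hu, hk⟩, hl⟩, hb⟩ := hc
    have hu : u < k := Nat.le_of_ble_eq_true hu
    have hk : 18 ≤ k := Nat.le_of_ble_eq_true hk
    obtain ⟨x, hx, hn⟩ := h.exists_new hG hu hl hb (fun w => nb_symm E u w)
    have h2 := h.extend hu hx hn hF
    have hinj : Function.Injective (fun i : Fin (k + 1) => (if i.1 = k then x else φ i.1)) := by
      intro i j hij
      exact Fin.ext (h2.inj i.1 i.2 j.1 j.2 hij)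
    have := Fintype.card_le_of_injective _ hinj
    rw [Fintype.card_fin] at this
    omega
  | k a b c d e f =>
    intro k E F hc hF φ h
    exact hK (h.k33 a b c d e f hc)
  | p i σ =>
    intro k E F hc hF φ h
    simp only [chk] at hc
    split at hc
    · simp at hc
    · rename_i k' E' hi
      simp only [Bool.and_eq_true] at hc
      obtain ⟨⟨⟨hlen, hlt⟩, hnd⟩, hE⟩ := hc
      have hlen := Nat.eq_of_beq_eq_true hlen
      have hlt := allLt_spec _ _ hlt
      have hnd := nodupB_spec _ hnd
      have hE := edgesMap_spec _ _ _ hE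
      have hmem : (k', E') ∈ pats := List.mem_of_getElem? hi
      refine hp _ hmem (fun i => φ (nth σ i)) ⟨?_, ?_, by simp⟩
      · intro i hi j hj hij
        dsimp only at hi hj hij
        rw [nth_eq σ i (by omega), nth_eq σ j (by omega)] at hij
        have := h.inj _ (hlt _ (List.getElem_mem _)) _ (hlt _ (List.getElem_mem _)) hij
        exact (hnd.getElem_inj_iff).1 this
      · intro p hp
        obtain ⟨h1, h2, h3⟩ := hE p hp
        exact ⟨h1, h2, (h.nb_spec h3).2.2⟩

theorem refute [Fintype V] (hG : Cubic5 G) (hcard : Fintype.card V ≤ 18)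
    (hK : ¬ (completeBipartiteGraph (Fin 3) (Fin 3)).IsMinorOf G)
    (pats : List (ℕ × List (ℕ × ℕ))) (hp : ∀ p ∈ pats, Refuted G p) (t : Tr)
    (p : ℕ × List (ℕ × ℕ)) (hc : chk pats t p.1 p.2 [] = true) : Refuted G p :=
  fun φ => sound hG hcard hK pats hp t p.1 p.2 [] hc (by simp) φ

end CubicSearch

namespace CubicSearch
def pat0 : ℕ × List (ℕ × ℕ) := (9, [(0, 1), (1, 2), (2, 3), (3, 4), (0, 4), (0, 5), (2, 6), (5, 6), (1, 7), (7, 8), (5, 8)])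

def cert0 : Tr :=
(.n 4 (.s 3 8 (.k [4,0] [6,2] [8] [7,1] [3] [5])
(.n 3 (.s 8 9 (.k [0] [6,3,2] [8] [7,1] [9,4] [5])
(.s 8 10 (.k [4,0] [6,2] [8] [7,1] [10,3] [5])
(.n 8 (.s 11 9 (.k [0] [6,3,2] [8] [7,1] [11,9,4] [5])
(.s 11 10 (.k [4,0] [6,2] [8] [7,1] [11,10,3] [5])
(.n 11 (.n 11 (.s 7 9 (.k [0] [6,3,2] [7] [1] [9,4] [8,5])
(.s 7 10 (.k [4,0] [6,2] [7] [1] [10,3] [8,5])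
(.n 7 (.s 10 12 (.k [4,0] [6,2] [8] [7,1] [11,12,10,3] [5])
(.s 10 13 (.k [4,0] [6,2] [8] [7,1] [11,13,10,3] [5])
(.s 10 14 (.k [4,0] [6,2] [7] [1] [14,10,3] [8,5])
(.n 10 (.n 10 (.s 12 9 (.k [0] [6,3,2] [8] [7,1] [11,12,9,4] [5])
(.s 12 15 (.k [4,0] [6,2] [8] [7,1] [11,12,15,10,3] [5])
(.s 12 16 (.k [4,0] [6,2] [8] [7,1] [11,12,16,10,3] [5])
(.s 12 6 (.s 12 14 (.s 13 9 (.k [13,9,4,3,1,2] [8] [12] [5,6] [14,7] [11])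
(.s 13 15 (.k [13,15,10,3,1,2] [8] [12] [5,6] [14,7] [11])
(.s 13 16 (.k [13,16,10,3,1,2] [8] [12] [5,6] [14,7] [11])
(.n 13 (.d 13)))))
(.n 12 (.s 13 9 (.k [3,7,1,2] [5] [11] [13,9,0,4] [12,6] [8])
(.s 13 15 (.k [7,1,2] [5] [11] [13,15,10,0,4,3] [12,6] [8])
(.s 13 16 (.k [7,1,2] [5] [11] [13,16,10,0,4,3] [12,6] [8])
(.s 13 14 (.d 13)
(.d 13)))))))
(.s 12 14 (.n 12 (.s 13 9 (.k [0] [6,3,2] [11] [12,14,7,1] [13,9,4] [8,5])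
(.s 13 15 (.k [4,0] [6,2] [11] [12,14,7,1] [13,15,10,3] [8,5])
(.s 13 16 (.k [4,0] [6,2] [11] [12,14,7,1] [13,16,10,3] [8,5])
(.s 13 6 (.d 13)
(.d 13))))))
(.n 12 (.d 12)))))))))))))))))))))))))

theorem chk0 : chk [] cert0 pat0.1 pat0.2 [] = true := by decide +kernel

def pat1 : ℕ × List (ℕ × ℕ) := (10, [(0, 1), (1, 2), (2, 3), (3, 4), (0, 4), (0, 5), (2, 6), (5, 6), (1, 7), (4, 8), (7, 9), (8, 9)])

def cert1 : Tr :=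
(.n 7 (.s 8 6 (.k [5,0] [3,2] [8] [9,7,1] [4] [6])
(.n 8 (.s 9 5 (.p 0 [0,1,2,3,4,5,6,7,9])
(.s 9 6 (.p 0 [1,2,6,9,7,0,5,3,4])
(.n 9 (.s 5 10 (.p 0 [0,1,2,3,4,5,6,7,10])
(.s 5 11 (.k [0] [6,3,2] [8] [9,7,1] [4] [11,5])
(.s 5 12 (.k [0] [6,3,2] [9] [7,1] [8,4] [12,5])
(.n 5 (.s 6 10 (.p 0 [1,2,6,10,7,0,5,3,4])
(.s 6 11 (.k [5,0] [3,2] [8] [9,7,1] [4] [11,6])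
(.s 6 12 (.k [5,0] [3,2] [9] [7,1] [8,4] [12,6])
(.n 6 (.s 14 10 (.k [5,0] [3,2] [7] [1] [9,8,4] [10,14,6])
(.s 14 11 (.k [5,0] [3,2] [8] [9,7,1] [4] [11,14,6])
(.s 14 12 (.k [5,0] [3,2] [9] [7,1] [8,4] [12,14,6])
(.n 14 (.n 14 (.s 11 13 (.k [0] [6,3,2] [8] [9,7,1] [4] [11,13,5])
(.s 11 15 (.k [5,0] [3,2] [8] [9,7,1] [4] [11,15,14,6])
(.s 11 16 (.k [5,0] [3,2] [8] [9,7,1] [4] [11,16,14,6])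
(.s 11 10 (.n 11 (.s 10 3 (.p 0 [1,2,3,10,7,0,4,6,5])
(.s 10 13 (.k [0] [6,3,2] [10] [7,1] [11,8,4] [13,5])
(.s 10 15 (.k [5,0] [3,2] [10] [7,1] [11,8,4] [15,14,6])
(.s 10 16 (.k [5,0] [3,2] [10] [7,1] [11,8,4] [16,14,6])
(.d 10))))))
(.n 11 (.d 11)))))))))))))))))))))))))

theorem chk1 : chk [pat0] cert1 pat1.1 pat1.2 [] = true := by decide +kernel

def pat2 : ℕ × List (ℕ × ℕ) := (7, [(0, 1), (1, 2), (2, 3), (3, 4), (0, 4), (0, 5), (2, 6), (5, 6)])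

def cert2 : Tr :=
(.n 1 (.n 3 (.n 4 (.s 7 8 (.p 0 [1,2,3,8,7,0,4,6,5])
(.s 7 9 (.p 0 [0,1,2,6,5,4,3,7,9])
(.n 7 (.n 7 (.s 10 5 (.p 0 [0,1,2,3,4,5,6,7,10])
(.s 10 6 (.p 0 [1,2,6,10,7,0,5,3,4])
(.s 10 8 (.p 1 [2,1,0,4,3,6,5,7,8,10])
(.s 10 9 (.p 1 [0,1,2,3,4,5,6,7,9,10])
(.n 10 (.n 10 (.s 11 5 (.p 0 [0,1,2,3,4,5,6,7,11])
(.s 11 6 (.p 0 [1,2,6,11,7,0,5,3,4])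
(.s 11 8 (.p 1 [2,1,0,4,3,6,5,7,8,11])
(.s 11 9 (.p 1 [0,1,2,3,4,5,6,7,9,11])
(.n 11 (.n 11 (.s 5 12 (.p 1 [0,1,2,6,5,4,3,7,12,10])
(.s 5 13 (.p 1 [0,1,2,6,5,4,3,7,13,10])
(.s 5 14 (.p 1 [0,1,2,6,5,4,3,7,14,11])
(.s 5 15 (.p 1 [0,1,2,6,5,4,3,7,15,11])
(.s 5 8 (.s 8 12 (.k [4,0] [6,2] [8] [12,10,7,1] [3] [5])
(.s 8 13 (.k [4,0] [6,2] [8] [13,10,7,1] [3] [5])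
(.s 8 14 (.k [4,0] [6,2] [8] [14,11,7,1] [3] [5])
(.s 8 15 (.k [4,0] [6,2] [8] [15,11,7,1] [3] [5])
(.n 8 (.s 6 9 (.p 0 [0,4,3,2,1,5,8,9,6])
(.s 6 12 (.p 1 [2,1,0,5,6,3,4,7,12,10])
(.s 6 13 (.p 1 [2,1,0,5,6,3,4,7,13,10])
(.s 6 14 (.p 1 [2,1,0,5,6,3,4,7,14,11])
(.s 6 15 (.p 1 [2,1,0,5,6,3,4,7,15,11])
(.n 6 (.s 16 9 (.p 0 [3,4,0,1,2,8,5,9,16])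
(.s 16 12 (.k [4,0] [6,2] [8] [16,12,10,7,1] [3] [5])
(.s 16 13 (.k [4,0] [6,2] [8] [16,13,10,7,1] [3] [5])
(.s 16 14 (.k [4,0] [6,2] [8] [16,14,11,7,1] [3] [5])
(.s 16 15 (.k [4,0] [6,2] [8] [16,15,11,7,1] [3] [5])
(.s 16 17 (.p 0 [5,6,2,1,0,8,3,17,16])
(.d 16))))))))))))))))))
(.n 5 (.s 6 12 (.p 1 [2,1,0,5,6,3,4,7,12,10])
(.s 6 13 (.p 1 [2,1,0,5,6,3,4,7,13,10])
(.s 6 14 (.p 1 [2,1,0,5,6,3,4,7,14,11])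
(.s 6 15 (.p 1 [2,1,0,5,6,3,4,7,15,11])
(.s 6 9 (.s 9 12 (.k [5,0] [3,2] [9] [12,10,7,1] [4] [6])
(.s 9 13 (.k [5,0] [3,2] [9] [13,10,7,1] [4] [6])
(.s 9 14 (.k [5,0] [3,2] [9] [14,11,7,1] [4] [6])
(.s 9 15 (.k [5,0] [3,2] [9] [15,11,7,1] [4] [6])
(.n 9 (.s 17 8 (.p 0 [3,4,9,17,8,2,6,0,1])
(.s 17 12 (.k [5,0] [3,2] [9] [17,12,10,7,1] [4] [6])
(.s 17 13 (.k [5,0] [3,2] [9] [17,13,10,7,1] [4] [6])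
(.s 17 14 (.k [5,0] [3,2] [9] [17,14,11,7,1] [4] [6])
(.s 17 15 (.k [5,0] [3,2] [9] [17,15,11,7,1] [4] [6])
(.s 17 16 (.p 0 [5,6,9,17,16,0,4,2,1])
(.d 17))))))))))))
(.n 6 (.s 8 12 (.s 16 8 (.k [4,0] [6,2] [8] [12,10,7,1] [3] [16,5])
(.s 16 12 (.k [4,0] [6,2] [12] [10,7,1] [8,3] [16,5])
(.s 16 13 (.k [4,0] [6,2] [10] [7,1] [12,8,3] [13,16,5])
(.s 16 14 (.k [4,0] [6,2] [7] [1] [10,12,8,3] [11,14,16,5])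
(.s 16 15 (.k [4,0] [6,2] [7] [1] [10,12,8,3] [11,15,16,5])
(.s 16 9 (.d 16)
(.d 16)))))))
(.s 8 13 (.s 16 8 (.k [4,0] [6,2] [8] [13,10,7,1] [3] [16,5])
(.s 16 12 (.k [4,0] [6,2] [10] [7,1] [13,8,3] [12,16,5])
(.s 16 13 (.k [4,0] [6,2] [13] [10,7,1] [8,3] [16,5])
(.s 16 14 (.k [4,0] [6,2] [7] [1] [10,13,8,3] [11,14,16,5])
(.s 16 15 (.k [4,0] [6,2] [7] [1] [10,13,8,3] [11,15,16,5])
(.s 16 9 (.d 16)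
(.d 16)))))))
(.s 8 14 (.s 8 16 (.k [4,0] [6,2] [8] [14,11,7,1] [3] [16,5])
(.s 8 17 (.k [5,4,0] [2] [8] [14,11,7,1] [3] [17,6])
(.d 8)))
(.s 8 15 (.s 8 16 (.k [4,0] [6,2] [8] [15,11,7,1] [3] [16,5])
(.s 8 17 (.k [5,4,0] [2] [8] [15,11,7,1] [3] [17,6])
(.d 8)))
(.s 8 16 (.s 8 17 (.s 17 9 (.p 0 [8,17,6,5,16,3,2,9,4])
(.s 17 12 (.k [12,10,7,0,1] [6] [8] [3,2] [16,5] [17])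
(.s 17 13 (.k [13,10,7,0,1] [6] [8] [3,2] [16,5] [17])
(.s 17 14 (.k [14,11,7,0,1] [6] [8] [3,2] [16,5] [17])
(.s 17 15 (.k [15,11,7,0,1] [6] [8] [3,2] [16,5] [17])
(.d 17))))))
(.d 8))
(.s 8 17 (.d 8)
(.d 8))))))))))))))))))))))))))))))))))))))

theorem chk2 : chk [pat0, pat1] cert2 pat2.1 pat2.2 [] = true := by decide +kernel

def pat3 : ℕ × List (ℕ × ℕ) := (10, [(0, 1), (0, 2), (0, 3), (1, 4), (2, 5), (4, 5), (2, 6), (3, 7), (6, 7), (3, 8), (1, 9), (8, 9)])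

def cert3 : Tr :=
(.s 4 7 (.p 0 [0,1,4,5,2,3,7,9,8])
(.n 4 (.s 6 9 (.p 0 [0,1,9,8,3,2,6,4,5])
(.s 6 10 (.p 2 [2,5,4,1,0,6,10])
(.n 6 (.s 7 10 (.s 9 11 (.k [5,0,2] [7] [9] [8,3] [10,1,4] [11,6])
(.n 9 (.s 5 8 (.p 0 [0,2,5,4,1,3,8,6,7])
(.s 5 12 (.p 1 [1,4,5,2,0,9,12,10,3,7])
(.n 5 (.s 8 11 (.p 1 [3,7,6,2,0,8,11,10,1,4])
(.s 8 13 (.k [9,0,1] [13,5] [3,7] [6,2] [10,4] [8])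
(.n 8 (.s 11 12 (.k [5,0,2] [7] [9] [8,3] [10,1,4] [12,11,6])
(.s 11 14 (.k [5,0,2] [7] [8] [3] [10,9,1,4] [14,11,6])
(.s 11 13 (.n 11 (.s 13 12 (.k [0,2] [7] [13] [12,9,8,3] [10,4,5] [11,6])
(.s 13 14 (.k [0,2] [7] [13] [14,8,3] [10,4,5] [11,6])
(.n 13 (.s 12 15 (.k [0,2] [7] [11] [15,12,9,8,3] [13,10,4,5] [6])
(.s 12 16 (.k [0,2] [7] [13] [16,12,9,8,3] [10,4,5] [11,6])
(.s 12 10 (.n 12 (.s 15 14 (.k [2,0,3] [10] [11] [13,4,5] [6,7] [15,14,12,9,8])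
(.s 15 17 (.k [13,5,1,4] [6,8,3,7] [12] [9] [10] [17,15,11])
(.d 15))))
(.n 12 (.d 12)))))))))
(.n 11 (.n 11 (.s 12 13 (.k [0,1] [12,13,5] [8,3,7] [6,2] [10,4] [9])
(.s 12 15 (.k [5,0,2] [7] [9] [8,3] [10,1,4] [12,15,11,6])
(.s 12 16 (.k [5,0,2] [7] [9] [8,3] [10,1,4] [12,16,11,6])
(.s 12 10 (.n 12 (.s 15 14 (.k [4,5,0,2] [7] [12,9,8] [3] [14,15,11,6] [10])
(.s 15 17 (.k [2,5,1,4] [8,3,7] [12] [17,15,11,6] [9] [10])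
(.s 15 13 (.d 15)
(.d 15)))))
(.n 12 (.d 12)))))))))))))))))))
(.n 7 (.s 8 5 (.p 0 [0,2,5,4,1,3,8,6,7])
(.s 8 10 (.p 2 [1,9,8,3,0,4,10])
(.s 8 11 (.p 2 [3,7,6,2,0,8,11])
(.n 8 (.s 5 12 (.p 2 [2,6,7,3,0,5,12])
(.s 5 13 (.s 9 11 (.k [4,0,1] [11,6] [8] [7,3] [13,2,5] [9])
(.s 9 12 (.p 1 [3,8,9,1,0,7,12,13,2,5])
(.n 9 (.s 10 11 (.k [9,0,1] [13,5] [3,7,6] [2] [11,10,4] [8])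
(.s 10 12 (.k [9,0,1] [13,5] [3,7] [6,2] [12,10,4] [8])
(.s 10 14 (.n 10 (.s 14 11 (.k [7,1,0,3] [13,2,5] [14] [10,4] [11,6] [9,8])
(.s 14 12 (.k [1,0,3] [13,6,2,5] [14] [10,4] [12,7] [9,8])
(.n 14 (.s 11 15 (.k [7,1,0,3] [13,2,5] [10] [4] [15,11,6] [14,9,8])
(.s 11 16 (.k [7,1,0,3] [13,2,5] [14] [10,4] [16,11,6] [9,8])
(.s 11 13 (.n 11 (.s 15 12 (.k [2,0,3] [10] [13] [4,5] [15,12,11,6,7] [14,9,8])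
(.s 15 17 (.k [4,2,5] [14,9,8] [11] [3,7,6] [17,15,10] [13])
(.d 15))))
(.n 11 (.d 11)))))))))
(.n 10 (.n 10 (.s 11 14 (.k [4,0,1] [14,11,6] [8] [7,3] [13,2,5] [9])
(.s 11 15 (.k [9,0,1] [13,5] [3,7,6] [2] [11,15,10,4] [8])
(.s 11 16 (.k [9,0,1] [13,5] [3,7,6] [2] [11,16,10,4] [8])
(.s 11 13 (.n 11 (.s 15 12 (.k [0,2] [7] [13] [8,3] [12,15,10,4,5] [11,6])
(.s 15 17 (.k [17,15,10,9,1,4] [3,7,6] [13] [2,5] [8] [11])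
(.s 15 14 (.d 15)
(.d 15)))))
(.n 11 (.d 11))))))))))))))
(.n 5 (.s 9 12 (.p 2 [3,8,9,1,0,7,12])
(.s 9 14 (.p 2 [1,4,5,2,0,9,14])
(.s 9 11 (.s 10 12 (.k [5,0,2] [7] [9] [8,3] [12,10,1,4] [11,6])
(.s 10 13 (.k [0,1] [11,6] [8] [7,3] [13,10,2,5,4] [9])
(.s 10 11 (.n 10 (.s 12 14 (.k [0,2] [7] [11] [9,8,3] [12,14,10,4,5] [6])
(.s 12 15 (.k [2,5,1,4] [15,12,8,3,7] [11] [6] [9] [10])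
(.s 12 13 (.n 12 (.s 13 14 (.k [2,0,3] [11] [13] [14,10,4,5] [12,6,7] [9,8])
(.s 13 15 (.k [2,5,1,4] [11] [13] [12,7,6] [8,9] [15,10])
(.n 13 (.s 16 14 (.k [2,0,3] [11] [12] [16,14,10,4,5] [6,7] [13,9,8])
(.s 16 15 (.k [2,5,1,4] [11] [12] [7,6] [13,8,9] [16,15,10])
(.d 16)))))))
(.n 12 (.n 12 (.s 16 14 (.k [0,2] [7] [11] [9,8,3] [12,16,14,10,4,5] [6])
(.s 16 15 (.k [2,5,1,4] [15,16,12,8,3,7] [11] [6] [9] [10])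
(.s 16 13 (.d 16)
(.d 16))))))))))
(.n 10 (.n 10 (.s 12 14 (.k [0,2] [7] [9] [8,3] [12,14,1,4,5] [11,6])
(.s 12 15 (.k [5,0,2] [7] [9] [8,3] [12,15,10,1,4] [11,6])
(.s 12 16 (.k [5,0,2] [7] [9] [8,3] [12,16,10,1,4] [11,6])
(.s 12 13 (.n 12 (.s 13 14 (.k [14,5,0,2] [12,7] [8] [3] [9,11,6] [13])
(.s 13 15 (.k [15,10,4,5,0,2] [12,7] [8] [3] [9,11,6] [13])
(.s 13 16 (.k [16,10,4,5,0,2] [12,7] [8] [3] [9,11,6] [13])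
(.d 13)))))
(.n 12 (.d 12)))))))))))
(.n 9 (.s 10 11 (.s 14 11 (.p 2 [5,14,11,6,2,4,10])
(.s 14 12 (.k [0,2] [11,10,4] [7] [1,9,8,3] [12,14,5] [6])
(.s 14 13 (.k [9,0,1] [13,14,5] [3,7,6] [2] [11,10,4] [8])
(.s 14 15 (.k [0,1] [15,14,5] [8,3,7,6] [2] [11,10,4] [9])
(.n 14 (.n 14 (.s 16 12 (.k [0,2] [11,10,4] [7] [1,9,8,3] [12,16,14,5] [6])
(.s 16 13 (.k [9,0,1] [13,16,14,5] [3,7,6] [2] [11,10,4] [8])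
(.s 16 15 (.k [0,1] [15,16,14,5] [8,3,7,6] [2] [11,10,4] [9])
(.s 16 10 (.d 16)
(.s 16 11 (.d 16)
(.d 16))))))))))))
(.s 10 12 (.s 11 13 (.k [5,0,2] [7] [8] [3] [12,10,9,1,4] [13,11,6])
(.s 11 15 (.k [5,0,2] [7] [9] [8,3] [12,10,1,4] [15,11,6])
(.s 11 14 (.n 11 (.s 14 12 (.p 2 [6,11,14,5,2,7,12])
(.s 14 13 (.k [0,2] [7] [14] [13,8,3] [12,10,4,5] [11,6])
(.s 14 15 (.k [0,2] [7] [14] [15,9,8,3] [12,10,4,5] [11,6])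
(.n 14 (.s 13 16 (.k [0,2] [7] [11] [16,13,8,3] [14,12,10,4,5] [6])
(.s 13 17 (.k [0,2] [7] [14] [17,13,8,3] [12,10,4,5] [11,6])
(.s 13 10 (.d 13)
(.s 13 12 (.d 13)
(.d 13))))))))))
(.n 11 (.n 11 (.s 13 14 (.k [9,0,1] [13,14,5] [3,7] [6,2] [12,10,4] [8])
(.s 13 16 (.k [5,0,2] [7] [8] [3] [12,10,9,1,4] [13,16,11,6])
(.s 13 17 (.k [5,0,2] [7] [8] [3] [12,10,9,1,4] [13,17,11,6])
(.s 13 10 (.d 13)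
(.s 13 12 (.d 13)
(.d 13)))))))))))
(.s 10 13 (.s 10 15 (.p 2 [9,15,10,4,1,8,13])
(.n 10 (.s 15 11 (.k [0,1] [15,11,6] [8] [7,3] [13,10,2,5,4] [9])
(.s 15 12 (.k [0,1] [15,12,7] [8] [3] [13,10,6,2,5,4] [9])
(.s 15 14 (.k [0,1] [15,14,5] [8] [2,6,7,3] [13,10,4] [9])
(.s 15 16 (.n 15 (.s 16 11 (.k [2,5,1,4] [13,8] [16] [11,3,7,6] [15,9] [10])
(.s 16 12 (.k [6,2,5,1,4] [13,8] [16] [12,3,7] [15,9] [10])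
(.s 16 14 (.k [1,4] [13,8] [16] [14,3,7,6,2,5] [15,9] [10])
(.d 16)))))
(.n 15 (.d 15))))))))
(.s 10 15 (.n 10 (.s 15 14 (.p 2 [4,10,15,9,1,5,14])
(.s 15 11 (.s 12 14 (.k [0,2] [7] [15] [9,8,3] [12,14,10,4,5] [11,6])
(.s 12 16 (.k [2,5,1,4] [16,12,8,3,7] [15] [11,6] [9] [10])
(.s 12 13 (.n 12 (.s 13 11 (.p 2 [7,12,13,8,3,6,11])
(.s 13 14 (.k [2,0,3] [13] [15] [14,10,4,5] [12,11,6,7] [9,8])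
(.s 13 16 (.k [2,5,1,4] [13] [15] [11,12,7,6] [8,9] [16,10])
(.d 13)))))
(.n 12 (.d 12)))))
(.s 15 12 (.s 13 11 (.k [10,4,5,0,2] [12,7] [9,8] [3] [13,11,6] [15])
(.s 13 12 (.p 2 [8,13,12,7,3,9,15])
(.s 13 14 (.k [1,0,3] [13,14,6,2,5] [15] [10,4] [12,7] [9,8])
(.s 13 16 (.k [6,2,5,1,4] [16,13,8] [15] [12,3,7] [9] [10])
(.n 13 (.d 13))))))
(.n 15 (.s 11 13 (.s 12 13 (.p 2 [7,12,13,8,3,6,11])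
(.s 12 14 (.k [0,2] [7] [8] [3] [12,14,9,15,10,4,5] [13,11,6])
(.s 12 16 (.k [4,5,0,2] [16,12,7] [15,9,8] [3] [13,11,6] [10])
(.s 12 17 (.k [10,4,5,0,2] [17,12,7] [9,8] [3] [13,11,6] [15])
(.d 12)))))
(.s 11 14 (.s 11 16 (.s 14 12 (.p 1 [14,11,6,2,5,12,7,16,4,10])
(.s 14 13 (.k [4,2,5] [13,15,9,8] [11] [3,7,6] [16,10] [14])
(.s 14 17 (.k [4,2,5] [11] [15] [9,8,3,7,6] [16,10] [17,14])
(.d 14))))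
(.s 11 17 (.s 14 12 (.p 2 [6,11,14,5,2,7,12])
(.s 14 13 (.k [10,4,2,5] [13,9,8] [17,11] [3,7,6] [14] [15])
(.s 14 16 (.s 16 12 (.k [4,2,5] [11] [16] [12,7,6] [17,15,10] [14])
(.s 16 13 (.k [3,7,4,5,2,6] [15] [16] [13,9,8] [10] [17,14,11])
(.d 16)))
(.d 14))))
(.d 11)))
(.s 11 16 (.s 11 17 (.s 16 12 (.k [4,5,2,6] [15] [16] [12,9,8,3,7] [10] [17,11])
(.s 16 13 (.k [3,7,4,5,2,6] [15] [16] [13,9,8] [10] [17,11])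
(.s 16 14 (.s 14 12 (.k [4,5,2,6] [15] [16] [14,12,9,8,3,7] [10] [17,11])
(.s 14 13 (.k [4,6,2,5] [15] [16] [10] [17,11] [9,8,13,14])
(.d 14)))
(.d 16))))
(.d 11))
(.s 11 17 (.d 11)
(.d 11))))))))))
(.n 10 (.n 10 (.s 11 13 (.s 12 13 (.p 2 [7,12,13,8,3,6,11])
(.s 12 14 (.k [0,2] [7] [8] [3] [12,14,9,1,4,5] [13,11,6])
(.s 12 15 (.k [1,4,5,0,2] [15,12,7] [8] [3] [13,11,6] [9])
(.s 12 16 (.k [5,0,2] [7] [8] [3] [12,16,10,9,1,4] [13,11,6])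
(.s 12 17 (.k [5,0,2] [7] [8] [3] [12,17,10,9,1,4] [13,11,6])
(.d 12))))))
(.s 11 14 (.s 11 15 (.s 13 14 (.k [1,4,2,5] [13,8] [11] [3,7,6] [15,9] [14])
(.s 13 16 (.k [0,1] [8] [11] [6,7,3] [13,16,10,14,5,4] [15,9])
(.s 13 17 (.k [0,1] [8] [11] [6,7,3] [13,17,10,14,5,4] [15,9])
(.s 13 12 (.d 13)
(.d 13)))))
(.s 11 16 (.s 14 12 (.p 1 [14,11,6,2,5,12,7,16,4,10])
(.s 14 13 (.k [16,10,9,1,4] [3,7,6] [14] [2,5] [13,8] [11])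
(.s 14 15 (.k [16,10,1,4] [8,3,7,6] [14] [2,5] [15,9] [11])
(.s 14 17 (.p 2 [10,17,14,5,4,16,11])
(.d 14)))))
(.s 11 17 (.s 14 12 (.p 1 [14,11,6,2,5,12,7,17,4,10])
(.s 14 13 (.k [17,10,9,1,4] [3,7,6] [14] [2,5] [13,8] [11])
(.s 14 15 (.k [17,10,1,4] [8,3,7,6] [14] [2,5] [15,9] [11])
(.s 14 16 (.p 2 [10,16,14,5,4,17,11])
(.d 14)))))
(.d 11))))
(.s 11 15 (.s 13 14 (.k [4,0,1] [15,11,6] [8] [7,3] [13,14,2,5] [9])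
(.s 13 16 (.k [0,1] [15,11,6] [8] [7,3] [13,16,10,2,5,4] [9])
(.s 13 17 (.k [0,1] [15,11,6] [8] [7,3] [13,17,10,2,5,4] [9])
(.s 13 12 (.d 13)
(.d 13)))))
(.s 11 16 (.d 11)
(.s 11 17 (.d 11)
(.d 11))))))))))))))))))))))))))))))

theorem chk3 : chk [pat0, pat1, pat2] cert3 pat3.1 pat3.2 [] = true := by decide +kernel

def pat4 : ℕ × List (ℕ × ℕ) := (8, [(0, 1), (1, 2), (2, 3), (3, 4), (0, 4), (0, 5), (1, 6), (6, 7), (5, 7)])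

def cert4 : Tr :=
(.n 2 (.n 4 (.s 5 8 (.p 0 [0,1,2,3,4,5,8,6,7])
(.n 5 (.s 7 3 (.p 2 [0,4,3,2,1,5,7])
(.s 7 8 (.p 2 [1,6,7,5,0,2,8])
(.s 7 9 (.p 2 [0,5,7,6,1,4,9])
(.n 7 (.s 6 9 (.p 0 [0,1,6,7,5,4,9,2,3])
(.n 6 (.s 3 10 (.p 2 [0,4,3,2,1,5,10])
(.s 3 12 (.p 2 [1,2,3,4,0,6,12])
(.s 3 11 (.n 11 (.s 8 9 (.p 1 [2,3,4,0,1,8,9,11,6,7])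
(.s 8 10 (.k [4,0] [10,8,2] [7] [6,1] [11,3] [5])
(.s 8 12 (.p 3 [1,0,2,6,4,3,8,12,7,5])
(.s 8 13 (.n 8 (.s 9 10 (.p 3 [0,1,4,5,2,3,9,10,7,6])
(.s 9 12 (.k [5,0] [6] [11] [13,8,2,1] [12,9,3,4] [7])
(.s 9 13 (.p 1 [3,11,13,8,2,4,9,7,1,6])
(.s 9 14 (.k [6,1,2] [14,9,5,0,4] [11] [3] [7] [13,8])
(.n 9 (.n 9 (.s 13 10 (.k [8,6,1,2] [10,5] [11] [0,4,3] [7] [13])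
(.s 13 15 (.k [8,6,1,2] [15,9,5,0,4] [11] [3] [7] [13])
(.s 13 16 (.k [8,6,1,2] [16,9,5,0,4] [11] [3] [7] [13])
(.s 13 12 (.s 12 10 (.p 0 [6,7,5,0,1,12,10,11,13])
(.s 12 15 (.k [8,1,2] [11] [12] [15,9,4,3] [7,6] [13])
(.s 12 16 (.k [8,1,2] [11] [12] [16,9,4,3] [7,6] [13])
(.n 12 (.s 14 10 (.k [3,1,2] [14,10,5,7] [13] [12,6] [8] [11])
(.s 14 15 (.k [1,2,3] [7] [13] [8,14,15,9,5,0,4] [12,6] [11])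
(.s 14 16 (.k [1,2,3] [7] [13] [8,14,16,9,5,0,4] [12,6] [11])
(.s 14 17 (.p 3 [13,8,11,12,2,3,7,6,17,14])
(.d 14)))))))))
(.n 13 (.s 14 10 (.k [6,1,2] [14,10,5] [11] [0,4,3] [7] [13,8])
(.s 14 15 (.k [6,1,2] [14,15,9,5,0,4] [11] [3] [7] [13,8])
(.s 14 16 (.k [6,1,2] [14,16,9,5,0,4] [11] [3] [7] [13,8])
(.s 14 12 (.d 14)
(.d 14)))))))))))))))))
(.n 8 (.n 8 (.s 10 9 (.p 3 [0,1,4,5,2,3,9,10,7,6])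
(.s 10 12 (.p 1 [5,7,6,1,0,10,12,11,4,3])
(.s 10 14 (.k [4,0] [10,14,8,2] [7] [6,1] [11,3] [5])
(.s 10 15 (.k [4,0] [10,15,8,2] [7] [6,1] [11,3] [5])
(.s 10 13 (.n 10 (.s 13 12 (.p 1 [7,11,13,10,5,6,12,3,0,4])
(.s 13 14 (.k [14,8,6,1,2] [10,5] [11] [0,4,3] [7] [13])
(.s 13 15 (.k [15,8,6,1,2] [10,5] [11] [0,4,3] [7] [13])
(.s 13 9 (.s 9 12 (.k [3,0,4] [12,6,7] [13] [10,5] [9] [11])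
(.s 9 14 (.k [3,0,4] [14,8,2,1,6,7] [13] [10,5] [9] [11])
(.s 9 15 (.k [3,0,4] [15,8,2,1,6,7] [13] [10,5] [9] [11])
(.n 9 (.s 16 12 (.k [9,1,2,3,0,4] [11,7] [10] [5] [16,12,6] [13])
(.s 16 14 (.k [16,14,8,2,3] [7,5] [13] [9,0,4] [10] [11])
(.s 16 15 (.k [16,15,8,2,3] [7,5] [13] [9,0,4] [10] [11])
(.s 16 17 (.p 3 [13,9,10,11,17,16,5,7,3,4])
(.d 16)))))))))
(.n 13 (.s 16 12 (.k [0,4,1,2,3] [7] [13,10] [5] [16,12,6] [11])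
(.s 16 14 (.k [16,14,8,6,1,2] [5] [11] [0,4,3] [7] [13,10])
(.s 16 15 (.k [16,15,8,6,1,2] [5] [11] [0,4,3] [7] [13,10])
(.s 16 9 (.d 16)
(.d 16)))))))))))
(.n 10 (.n 10 (.s 14 16 (.k [4,0] [10,16,14,8,2] [7] [6,1] [11,3] [5])
(.s 14 17 (.k [4,0] [10,17,14,8,2] [7] [6,1] [11,3] [5])
(.s 14 9 (.s 14 12 (.k [0,1] [7,11,3] [14] [8,2] [9,4] [12,6])
(.s 14 13 (.k [8,6,1,2] [9,5,0,4] [13,11] [3] [7] [14])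
(.d 14)))
(.s 14 12 (.s 14 13 (.s 12 9 (.k [8,1,2] [13,11] [12] [9,4,3] [7,6] [14])
(.s 12 16 (.k [0,4,1,2,3] [7] [12] [16,10,5] [6] [14,13,11])
(.s 12 17 (.k [0,4,1,2,3] [7] [12] [17,10,5] [6] [14,13,11])
(.d 12))))
(.d 14))
(.s 14 13 (.d 14)
(.d 14))))))))))))))))))))
(.n 3 (.s 8 9 (.p 2 [2,3,4,0,1,8,9])
(.s 8 12 (.p 3 [1,0,2,6,4,3,8,12,7,5])
(.s 8 10 (.s 9 10 (.p 3 [0,1,4,5,2,3,9,10,7,6])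
(.s 9 11 (.k [0] [10,8,3,2] [7] [6,1] [11,9,4] [5])
(.s 9 12 (.k [0] [10,8,3,2] [6] [1] [12,9,4] [7,5])
(.n 9 (.n 9 (.s 12 10 (.p 2 [5,7,6,1,0,10,12])
(.s 12 13 (.k [4,0] [10,8,2] [6] [1] [12,13,3] [7,5])
(.s 12 14 (.k [0] [10,8,3,2] [6] [1] [12,14,9,4] [7,5])
(.s 12 15 (.k [0] [10,8,3,2] [6] [1] [12,15,9,4] [7,5])
(.n 12 (.n 12 (.s 11 13 (.k [4,0] [10,8,2] [7] [6,1] [11,13,3] [5])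
(.s 11 14 (.k [0] [10,8,3,2] [7] [6,1] [11,14,9,4] [5])
(.s 11 15 (.k [0] [10,8,3,2] [7] [6,1] [11,15,9,4] [5])
(.s 11 8 (.s 11 16 (.p 3 [7,5,6,11,0,1,12,16,8,10])
(.s 11 17 (.p 3 [7,5,6,11,0,1,12,17,8,10])
(.d 11)))
(.s 11 16 (.d 11)
(.s 11 17 (.d 11)
(.d 11))))))))))))))))))
(.s 8 11 (.n 8 (.s 12 9 (.k [5,0] [11,8,3,2] [6] [1] [12,9,4] [7])
(.s 12 10 (.p 1 [6,7,5,0,1,12,10,11,2,8])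
(.s 12 13 (.k [5,4,0] [11,8,2] [6] [1] [12,13,3] [7])
(.s 12 14 (.n 12 (.s 14 9 (.k [3,1,2] [11,7] [14] [9,5,0,4] [12,6] [8])
(.s 14 10 (.k [0,4,3,1,2] [11,7] [14] [10,5] [12,6] [8])
(.s 14 13 (.k [1,2] [11,7] [14] [13,5,0,4,3] [12,6] [8])
(.n 14 (.s 16 9 (.k [3,1,2] [11,7] [14] [16,9,5,0,4] [12,6] [8])
(.s 16 10 (.k [0,4,3,1,2] [11,7] [14] [16,10,5] [12,6] [8])
(.s 16 13 (.k [1,2] [11,7] [14] [16,13,5,0,4,3] [12,6] [8])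
(.n 16 (.d 16))))))))))
(.n 12 (.n 12 (.s 9 10 (.p 3 [0,1,4,5,2,3,9,10,7,6])
(.s 9 15 (.k [5,0] [11,8,3,2] [6] [1] [12,15,9,4] [7])
(.s 9 16 (.k [5,0] [11,8,3,2] [6] [1] [12,16,9,4] [7])
(.s 9 11 (.n 9 (.s 15 13 (.k [0,1] [12,15,13,3] [11] [8,2] [9,4] [7,6])
(.s 15 17 (.k [8,3,1,2] [7] [9] [5,0,4] [17,15,12,6] [11])
(.s 15 10 (.s 15 14 (.k [9,1,2,3,0,4] [7] [15] [10,5] [12,6] [14,8,11])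
(.d 15))
(.s 15 14 (.d 15)
(.d 15))))))
(.s 9 14 (.n 9 (.s 14 13 (.p 2 [3,13,14,8,2,4,9])
(.s 14 15 (.k [3,1,2] [11,7] [14] [9,5,0,4] [15,12,6] [8])
(.s 14 16 (.k [3,1,2] [11,7] [14] [9,5,0,4] [16,12,6] [8])
(.s 14 10 (.s 10 13 (.k [13,2,3] [11,7,5] [14] [9,0,4] [8] [10])
(.s 10 15 (.k [9,1,2,3,0,4] [8,11,7] [10] [5] [15,12,6] [14])
(.s 10 16 (.k [9,1,2,3,0,4] [8,11,7] [10] [5] [16,12,6] [14])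
(.d 10))))
(.d 14))))))
(.n 9 (.d 9))))))))))))))
(.n 8 (.n 8 (.s 10 9 (.p 3 [0,1,4,5,2,3,9,10,7,6])
(.s 10 12 (.p 2 [5,7,6,1,0,10,12])
(.s 10 13 (.s 10 14 (.s 13 11 (.k [14,8,6,1,2] [5] [13] [0,4,3] [11,7] [10])
(.s 13 12 (.k [14,8,1,2] [7,5] [13] [0,4,3] [12,6] [10])
(.s 13 15 (.p 2 [8,15,13,3,2,14,10])
(.n 13 (.s 9 11 (.k [0] [7] [10] [6,14,8,2,1] [11,9,13,3,4] [5])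
(.s 9 12 (.k [0] [6] [10] [14,8,2,1] [12,9,13,3,4] [7,5])
(.s 9 14 (.k [8,7,6,1,2] [9,0,4] [10] [13,3] [5] [14])
(.s 9 15 (.k [7,6,1,2] [15,9,0,4] [10] [13,3] [5] [14,8])
(.s 9 16 (.n 9 (.s 16 11 (.k [6,1,2,3] [10,5] [16] [9,0,4] [11,7] [13])
(.s 16 12 (.k [1,2,3] [10,7,5] [16] [9,0,4] [12,6] [13])
(.s 16 15 (.k [2,3] [10] [16] [9,5,0,4] [15,14,8] [13])
(.d 16)))))
(.n 9 (.d 9)))))))))))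
(.s 10 15 (.s 13 11 (.k [15,8,6,1,2] [5] [13] [0,4,3] [11,7] [10])
(.s 13 12 (.k [15,8,1,2] [7,5] [13] [0,4,3] [12,6] [10])
(.s 13 14 (.p 2 [8,14,13,3,2,15,10])
(.n 13 (.s 9 11 (.k [0] [7] [10] [6,15,8,2,1] [11,9,13,3,4] [5])
(.s 9 12 (.k [0] [6] [10] [15,8,2,1] [12,9,13,3,4] [7,5])
(.s 9 14 (.k [7,6,1,2] [14,9,0,4] [10] [13,3] [5] [15,8])
(.s 9 15 (.k [8,7,6,1,2] [9,0,4] [10] [13,3] [5] [15])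
(.s 9 16 (.n 9 (.s 16 11 (.k [6,1,2,3] [10,5] [16] [9,0,4] [11,7] [13])
(.s 16 12 (.k [1,2,3] [10,7,5] [16] [9,0,4] [12,6] [13])
(.s 16 14 (.k [2,3] [10] [16] [9,5,0,4] [15,14,8] [13])
(.d 16)))))
(.n 9 (.d 9)))))))))))
(.n 10 (.s 9 11 (.k [0] [10,13,3] [7] [6,2,1] [11,9,4] [5])
(.s 9 12 (.k [0] [10,13,3] [6] [2,1] [12,9,4] [7,5])
(.s 9 14 (.s 9 16 (.k [14,8,7,6,1,2] [0,4] [10] [13,3] [5] [16,9])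
(.n 9 (.s 14 11 (.k [6,0,1] [5,10,13,3] [14] [8,2] [9,4] [11,7])
(.s 14 12 (.k [0,1] [7,5,10,13,3] [14] [8,2] [9,4] [12,6])
(.s 14 13 (.p 1 [3,13,14,9,4,2,8,10,0,5])
(.s 14 16 (.k [8,7,6,1,2] [9,0,4] [16,10] [13,3] [5] [14])
(.d 14)))))))
(.s 9 15 (.s 9 16 (.k [15,8,7,6,1,2] [0,4] [10] [13,3] [5] [16,9])
(.n 9 (.s 15 11 (.k [6,0,1] [5,10,13,3] [15] [8,2] [9,4] [11,7])
(.s 15 12 (.k [0,1] [7,5,10,13,3] [15] [8,2] [9,4] [12,6])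
(.s 15 13 (.p 1 [3,13,15,9,4,2,8,10,0,5])
(.s 15 16 (.k [8,7,6,1,2] [9,0,4] [16,10] [13,3] [5] [15])
(.d 15)))))))
(.s 9 16 (.n 9 (.s 16 11 (.k [13,6,1,2,3] [5] [16] [9,0,4] [11,7] [10])
(.s 16 12 (.k [13,1,2,3] [7,5] [16] [9,0,4] [12,6] [10])
(.s 16 14 (.k [14,8,7,6,1,2] [9,0,4] [10] [13,3] [5] [16])
(.s 16 15 (.k [15,8,7,6,1,2] [9,0,4] [10] [13,3] [5] [16])
(.d 16))))))
(.n 9 (.d 9))))))))))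
(.s 10 14 (.n 10 (.s 9 11 (.k [0] [10,14,8,3,2] [7] [6,1] [11,9,4] [5])
(.s 9 12 (.k [0] [10,14,8,3,2] [6] [1] [12,9,4] [7,5])
(.s 9 14 (.n 9 (.s 11 13 (.k [6,0,1] [11,13,3] [14] [8,2] [9,4] [10,5,7])
(.s 11 17 (.k [8,3,6,1,2] [10,5] [9] [0,4] [17,11,7] [14])
(.s 11 15 (.s 11 16 (.s 15 12 (.p 3 [7,5,6,11,0,1,12,15,16,10])
(.s 15 13 (.k [7,6,1,2] [14] [15] [13,9,4,3] [8] [10,16,11])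
(.s 15 17 (.k [4,3,7,6,1,2] [14] [15] [8] [17,9] [10,16,11])
(.d 15))))
(.d 11))
(.s 11 16 (.d 11)
(.d 11))))))
(.s 9 15 (.s 13 11 (.k [6,0,1] [11,13,3] [8] [2] [15,9,4] [14,10,5,7])
(.s 13 12 (.k [0,1] [12,13,3] [8] [2] [15,9,4] [14,10,5,7,6])
(.s 13 14 (.k [7,6,1,2] [15,9,0,4] [14] [13,3] [10,5] [8])
(.s 13 15 (.p 2 [3,13,15,8,2,4,9])
(.s 13 16 (.k [7,6,1,2] [15,9,0,4] [10] [16,13,3] [5] [14,8])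
(.n 13 (.d 13)))))))
(.s 9 16 (.n 9 (.s 16 11 (.k [14,8,3,6,1,2] [5] [16] [9,0,4] [11,7] [10])
(.s 16 12 (.k [14,8,3,1,2] [7,5] [16] [9,0,4] [12,6] [10])
(.s 16 13 (.s 13 11 (.k [14,8,2,3] [11,7,5] [16] [9,0,4] [10] [13])
(.s 13 12 (.k [14,8,2,3] [12,6,7,5] [16] [9,0,4] [10] [13])
(.s 13 15 (.p 3 [3,2,4,13,1,0,9,16,15,8])
(.d 13))))
(.s 16 15 (.s 15 11 (.k [9,4,3,6,1,2] [10] [15] [11,5,7] [14,8] [16])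
(.s 15 12 (.k [9,4,3,1,2] [10] [15] [12,5,7,6] [14,8] [16])
(.s 15 13 (.s 13 11 (.k [9,4,2,3] [11,7,5,10] [15] [14,8] [13] [16])
(.s 13 12 (.k [9,4,2,3] [12,6,7,5,10] [15] [14,8] [13] [16])
(.s 13 17 (.p 2 [9,17,13,3,4,16,15])
(.d 13))))
(.d 15))))
(.d 16))))))
(.n 9 (.d 9))))))))
(.s 10 15 (.n 10 (.s 9 11 (.k [0] [10,15,8,3,2] [7] [6,1] [11,9,4] [5])
(.s 9 12 (.k [0] [10,15,8,3,2] [6] [1] [12,9,4] [7,5])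
(.s 9 14 (.s 13 11 (.k [6,0,1] [11,13,3] [8] [2] [14,9,4] [15,10,5,7])
(.s 13 12 (.k [0,1] [12,13,3] [8] [2] [14,9,4] [15,10,5,7,6])
(.s 13 14 (.p 2 [3,13,14,8,2,4,9])
(.s 13 15 (.k [7,6,1,2] [14,9,0,4] [15] [13,3] [10,5] [8])
(.s 13 16 (.k [7,6,1,2] [14,9,0,4] [10] [16,13,3] [5] [15,8])
(.n 13 (.d 13)))))))
(.s 9 15 (.n 9 (.s 11 13 (.k [6,0,1] [11,13,3] [15] [8,2] [9,4] [10,5,7])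
(.s 11 17 (.k [8,3,6,1,2] [10,5] [9] [0,4] [17,11,7] [15])
(.s 11 14 (.s 11 16 (.s 14 12 (.p 3 [7,5,6,11,0,1,12,14,16,10])
(.s 14 13 (.k [7,6,1,2] [14] [15] [13,9,4,3] [8] [10,16,11])
(.s 14 17 (.k [4,3,7,6,1,2] [14] [15] [8] [17,9] [10,16,11])
(.d 14))))
(.d 11))
(.s 11 16 (.d 11)
(.d 11))))))
(.s 9 16 (.n 9 (.s 16 11 (.k [15,8,3,6,1,2] [5] [16] [9,0,4] [11,7] [10])
(.s 16 12 (.k [15,8,3,1,2] [7,5] [16] [9,0,4] [12,6] [10])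
(.s 16 13 (.s 13 11 (.k [15,8,2,3] [11,7,5] [16] [9,0,4] [10] [13])
(.s 13 12 (.k [15,8,2,3] [12,6,7,5] [16] [9,0,4] [10] [13])
(.s 13 14 (.p 3 [3,2,4,13,1,0,9,16,14,8])
(.d 13))))
(.s 16 14 (.s 14 11 (.k [9,4,3,6,1,2] [10] [14] [11,5,7] [15,8] [16])
(.s 14 12 (.k [9,4,3,1,2] [10] [14] [12,5,7,6] [15,8] [16])
(.s 14 13 (.s 13 11 (.k [9,4,2,3] [11,7,5,10] [14] [15,8] [13] [16])
(.s 13 12 (.k [9,4,2,3] [12,6,7,5,10] [14] [15,8] [13] [16])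
(.s 13 17 (.p 2 [9,17,13,3,4,16,14])
(.d 13))))
(.d 14))))
(.d 16))))))
(.n 9 (.d 9))))))))
(.n 10 (.n 10 (.s 9 11 (.s 16 13 (.k [0] [10,16,13,3] [7] [6,2,1] [11,9,4] [5])
(.s 16 14 (.k [0] [10,16,14,8,3,2] [7] [6,1] [11,9,4] [5])
(.s 16 15 (.k [0] [10,16,15,8,3,2] [7] [6,1] [11,9,4] [5])
(.s 16 9 (.s 16 12 (.k [1,2,3,0,4] [11,7] [16] [10,5] [12,6] [9])
(.d 16))
(.s 16 11 (.s 16 12 (.p 1 [7,11,16,10,5,6,12,9,0,4])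
(.d 16))
(.s 16 12 (.d 16)
(.d 16)))))))
(.s 9 12 (.s 11 13 (.k [5,0] [11,13,3] [6] [2,1] [12,9,4] [7])
(.s 11 14 (.k [5,0] [11,14,8,3,2] [6] [1] [12,9,4] [7])
(.s 11 15 (.k [5,0] [11,15,8,3,2] [6] [1] [12,9,4] [7])
(.s 11 16 (.d 11)
(.s 11 17 (.d 11)
(.d 11))))))
(.s 9 14 (.s 9 16 (.s 13 11 (.k [6,0,1] [11,13,3] [9] [14,8,2] [4] [16,10,5,7])
(.s 13 12 (.k [0,1] [12,13,3] [9] [14,8,2] [4] [16,10,5,7,6])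
(.s 13 14 (.p 2 [3,13,14,8,2,4,9])
(.s 13 16 (.k [14,8,7,6,1,2] [0,4] [16] [13,3] [10,5] [9])
(.s 13 17 (.k [14,8,7,6,1,2] [0,4] [10] [17,13,3] [5] [16,9])
(.s 13 15 (.d 13)
(.d 13)))))))
(.s 9 17 (.s 13 11 (.k [6,0,1] [11,13,3] [9] [14,8,2] [4] [17,10,5,7])
(.s 13 12 (.k [0,1] [12,13,3] [9] [14,8,2] [4] [17,10,5,7,6])
(.s 13 14 (.p 2 [3,13,14,8,2,4,9])
(.s 13 16 (.k [14,8,7,6,1,2] [0,4] [10] [16,13,3] [5] [17,9])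
(.s 13 17 (.k [14,8,7,6,1,2] [0,4] [17] [13,3] [10,5] [9])
(.s 13 15 (.d 13)
(.d 13)))))))
(.d 9)))
(.s 9 15 (.s 9 16 (.s 13 11 (.k [6,0,1] [11,13,3] [9] [15,8,2] [4] [16,10,5,7])
(.s 13 12 (.k [0,1] [12,13,3] [9] [15,8,2] [4] [16,10,5,7,6])
(.s 13 15 (.p 2 [3,13,15,8,2,4,9])
(.s 13 16 (.k [15,8,7,6,1,2] [0,4] [16] [13,3] [10,5] [9])
(.s 13 17 (.k [15,8,7,6,1,2] [0,4] [10] [17,13,3] [5] [16,9])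
(.s 13 14 (.d 13)
(.d 13)))))))
(.s 9 17 (.s 13 11 (.k [6,0,1] [11,13,3] [9] [15,8,2] [4] [17,10,5,7])
(.s 13 12 (.k [0,1] [12,13,3] [9] [15,8,2] [4] [17,10,5,7,6])
(.s 13 15 (.p 2 [3,13,15,8,2,4,9])
(.s 13 16 (.k [15,8,7,6,1,2] [0,4] [10] [16,13,3] [5] [17,9])
(.s 13 17 (.k [15,8,7,6,1,2] [0,4] [17] [13,3] [10,5] [9])
(.s 13 14 (.d 13)
(.d 13)))))))
(.d 9)))
(.s 9 16 (.d 9)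
(.s 9 17 (.d 9)
(.d 9))))))))))))))))))))))))))))))))))

theorem chk4 : chk [pat0, pat1, pat2, pat3] cert4 pat4.1 pat4.2 [] = true := by decide +kernel

def pat5 : ℕ × List (ℕ × ℕ) := (8, [(0, 1), (1, 2), (2, 3), (3, 4), (0, 4), (0, 5), (2, 6), (5, 7), (6, 7)])

def cert5 : Tr :=
(.n 1 (.n 3 (.n 4 (.s 5 9 (.p 2 [0,4,3,2,1,5,9])
(.n 5 (.s 6 10 (.p 2 [2,3,4,0,1,6,10])
(.n 6 (.s 7 8 (.p 2 [1,8,7,5,0,2,6])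
(.s 7 9 (.p 4 [2,3,4,0,1,6,9,7])
(.s 7 10 (.p 4 [0,4,3,2,1,5,10,7])
(.n 7 (.s 8 9 (.p 1 [1,2,3,4,0,8,9,6,5,7])
(.s 8 10 (.p 1 [1,0,4,3,2,8,10,5,6,7])
(.s 8 11 (.p 4 [0,1,2,3,4,5,8,11])
(.s 8 12 (.p 4 [1,2,3,4,0,8,6,12])
(.s 8 13 (.n 8 (.s 13 9 (.k [5,4,0] [6,2] [13] [8,1] [9,3] [7])
(.s 13 10 (.k [5,0] [6,3,2] [13] [8,1] [10,4] [7])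
(.n 13 (.s 9 12 (.p 4 [2,3,4,0,1,6,9,12])
(.s 9 14 (.k [5,4,0] [6,2] [8] [1] [14,9,3] [13,7])
(.s 9 15 (.k [5,4,0] [6,2] [13] [8,1] [15,9,3] [7])
(.s 9 11 (.n 9 (.s 10 11 (.p 2 [4,10,11,5,0,3,9])
(.s 10 12 (.k [13,8,0,1] [5,11,9,3] [6] [2] [12,10,4] [7])
(.s 10 14 (.k [0,1] [11,9,14,10,4,3] [13,7] [6,2] [5] [8])
(.s 10 15 (.k [8,0,1] [11,9,15,10,4,3] [7] [6,2] [5] [13])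
(.s 10 16 (.p 4 [3,4,0,1,2,9,10,16])
(.n 10 (.d 10))))))))
(.n 9 (.n 9 (.s 10 11 (.p 4 [0,4,3,2,1,5,10,11])
(.s 10 14 (.k [5,0] [6,3,2] [8] [1] [14,10,4] [13,7])
(.s 10 15 (.k [5,0] [6,3,2] [13] [8,1] [15,10,4] [7])
(.s 10 16 (.p 4 [3,4,0,1,2,9,10,16])
(.s 10 17 (.p 4 [3,4,0,1,2,9,10,17])
(.s 10 12 (.d 10)
(.d 10)))))))))))))))))
(.n 8 (.n 8 (.s 13 9 (.s 13 10 (.p 4 [3,4,0,1,2,9,10,13])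
(.s 13 14 (.k [5,4,0] [6,2] [13] [14,8,1] [9,3] [7])
(.s 13 15 (.k [5,4,0] [6,2] [13] [15,8,1] [9,3] [7])
(.n 13 (.s 9 12 (.p 2 [6,12,9,3,2,7,13])
(.s 9 14 (.k [5,4,0] [6,2] [9] [14,8,1] [3] [13,7])
(.s 9 15 (.k [5,4,0] [6,2] [9] [15,8,1] [3] [13,7])
(.s 9 11 (.s 11 10 (.p 2 [4,10,11,5,0,3,9])
(.s 11 12 (.p 1 [7,5,11,12,6,13,9,0,2,1])
(.s 11 14 (.k [6,14,8,1,2] [5] [9] [0,4,3] [13,7] [11])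
(.s 11 15 (.k [6,15,8,1,2] [5] [9] [0,4,3] [13,7] [11])
(.n 11 (.s 16 10 (.k [6,2,3] [11,5] [13] [16,10,0,4] [7] [9])
(.s 16 12 (.p 4 [7,13,9,11,5,6,16,12])
(.s 16 14 (.k [16,14,8,0,1] [7] [9] [6,3,2] [11,5] [13])
(.s 16 15 (.k [16,15,8,0,1] [7] [9] [6,3,2] [11,5] [13])
(.s 16 17 (.p 1 [11,9,13,7,5,17,16,3,0,4])
(.d 16)))))))))))
(.n 9 (.s 17 10 (.p 4 [3,4,0,1,2,9,10,17])
(.s 17 14 (.k [5,4,0] [6,2] [9] [17,14,8,1] [3] [13,7])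
(.s 17 15 (.k [5,4,0] [6,2] [9] [17,15,8,1] [3] [13,7])
(.s 17 11 (.s 17 12 (.k [0,4,2,3] [13,7] [17] [11,5] [12,6] [9])
(.d 17))
(.s 17 12 (.d 17)
(.d 17)))))))))))))))
(.s 13 10 (.s 13 14 (.k [5,0] [6,3,2] [13] [14,8,1] [10,4] [7])
(.s 13 15 (.k [5,0] [6,3,2] [13] [15,8,1] [10,4] [7])
(.n 13 (.s 10 11 (.p 2 [5,11,10,4,0,7,13])
(.s 10 14 (.k [5,0] [6,3,2] [10] [14,8,1] [4] [13,7])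
(.s 10 15 (.k [5,0] [6,3,2] [10] [15,8,1] [4] [13,7])
(.s 10 12 (.s 12 9 (.p 2 [3,9,12,6,2,4,10])
(.s 12 11 (.p 1 [7,6,12,11,5,13,10,2,0,1])
(.s 12 14 (.k [14,8,5,0,1] [6] [10] [4,3,2] [13,7] [12])
(.s 12 15 (.k [15,8,5,0,1] [6] [10] [4,3,2] [13,7] [12])
(.n 12 (.s 16 9 (.k [16,9,2,3] [7] [10] [5,0,4] [12,6] [13])
(.s 16 11 (.p 4 [7,13,10,12,6,5,16,11])
(.s 16 14 (.k [3,16,14,8,1,2] [7] [10] [5,0,4] [12,6] [13])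
(.s 16 15 (.k [3,16,15,8,1,2] [7] [10] [5,0,4] [12,6] [13])
(.s 16 17 (.p 1 [12,10,13,7,6,17,16,4,2,3])
(.d 16)))))))))))
(.n 10 (.s 17 9 (.p 4 [3,4,0,1,2,9,10,17])
(.s 17 14 (.k [5,0] [6,3,2] [10] [17,14,8,1] [4] [13,7])
(.s 17 15 (.k [5,0] [6,3,2] [10] [17,15,8,1] [4] [13,7])
(.s 17 11 (.s 17 12 (.k [2,3,0,4] [13,7] [17] [11,5] [12,6] [10])
(.d 17))
(.s 17 12 (.d 17)
(.d 17))))))))))))))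
(.s 13 14 (.n 13 (.s 9 12 (.p 4 [2,3,4,0,1,6,9,12])
(.s 9 14 (.k [5,4,0] [6,2] [14] [8,1] [9,3] [13,7])
(.s 9 15 (.k [5,4,0] [6,2] [8] [1] [15,9,3] [14,13,7])
(.s 9 16 (.k [5,4,0] [6,2] [13] [14,8,1] [16,9,3] [7])
(.s 9 11 (.n 9 (.s 10 11 (.p 2 [4,10,11,5,0,3,9])
(.s 10 12 (.k [13,14,8,0,1] [5,11,9,3] [6] [2] [12,10,4] [7])
(.s 10 14 (.k [8,0,1] [11,9,10,4,3] [13,7] [6,2] [5] [14])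
(.s 10 15 (.k [0,1] [11,9,15,10,4,3] [14,13,7] [6,2] [5] [8])
(.s 10 16 (.k [14,8,0,1] [11,9,16,10,4,3] [7] [6,2] [5] [13])
(.s 10 17 (.p 4 [3,4,0,1,2,9,10,17])
(.d 10))))))))
(.n 9 (.d 9))))))))
(.s 13 15 (.n 13 (.s 9 12 (.p 4 [2,3,4,0,1,6,9,12])
(.s 9 14 (.k [5,4,0] [6,2] [8] [1] [14,9,3] [15,13,7])
(.s 9 15 (.k [5,4,0] [6,2] [15] [8,1] [9,3] [13,7])
(.s 9 16 (.k [5,4,0] [6,2] [13] [15,8,1] [16,9,3] [7])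
(.s 9 11 (.n 9 (.s 10 11 (.p 2 [4,10,11,5,0,3,9])
(.s 10 12 (.k [13,15,8,0,1] [5,11,9,3] [6] [2] [12,10,4] [7])
(.s 10 14 (.k [0,1] [11,9,14,10,4,3] [15,13,7] [6,2] [5] [8])
(.s 10 15 (.k [8,0,1] [11,9,10,4,3] [13,7] [6,2] [5] [15])
(.s 10 16 (.k [15,8,0,1] [11,9,16,10,4,3] [7] [6,2] [5] [13])
(.s 10 17 (.p 4 [3,4,0,1,2,9,10,17])
(.d 10))))))))
(.n 9 (.d 9))))))))
(.n 13 (.n 13 (.s 9 12 (.p 4 [2,3,4,0,1,6,9,12])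
(.s 9 11 (.s 9 14 (.k [4,0] [7,6,2] [9] [14,8,1] [3] [11,5])
(.s 9 15 (.k [4,0] [7,6,2] [9] [15,8,1] [3] [11,5])
(.s 9 16 (.s 11 10 (.p 2 [4,10,11,5,0,3,9])
(.s 11 12 (.k [0,4,2,3] [16,13,7] [11] [5] [12,6] [9])
(.s 11 14 (.k [6,14,8,1,2] [5] [9] [0,4,3] [16,13,7] [11])
(.s 11 15 (.k [6,15,8,1,2] [5] [9] [0,4,3] [16,13,7] [11])
(.s 11 17 (.p 2 [11,17,13,7,5,9,16])
(.d 11))))))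
(.s 9 17 (.s 11 10 (.p 2 [4,10,11,5,0,3,9])
(.s 11 12 (.k [0,4,2,3] [17,13,7] [11] [5] [12,6] [9])
(.s 11 14 (.k [6,14,8,1,2] [5] [9] [0,4,3] [17,13,7] [11])
(.s 11 15 (.k [6,15,8,1,2] [5] [9] [0,4,3] [17,13,7] [11])
(.s 11 16 (.p 2 [11,16,13,7,5,9,17])
(.d 11))))))
(.d 9)))))
(.s 9 14 (.s 9 16 (.k [5,4,0] [6,2] [9] [14,8,1] [3] [16,13,7])
(.s 9 17 (.k [5,4,0] [6,2] [9] [14,8,1] [3] [17,13,7])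
(.d 9)))
(.s 9 15 (.s 9 16 (.k [5,4,0] [6,2] [9] [15,8,1] [3] [16,13,7])
(.s 9 17 (.k [5,4,0] [6,2] [9] [15,8,1] [3] [17,13,7])
(.d 9)))
(.s 9 16 (.d 9)
(.s 9 17 (.d 9)
(.d 9)))))))))))))))))))))))))))))))

theorem chk5 : chk [pat0, pat1, pat2, pat3, pat4] cert5 pat5.1 pat5.2 [] = true := by decide +kernel

def pat6 : ℕ × List (ℕ × ℕ) := (9, [(0, 1), (1, 2), (2, 3), (3, 4), (0, 4), (0, 5), (1, 6), (6, 7), (5, 8), (7, 8)])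

def cert6 : Tr :=
(.n 5 (.s 4 7 (.p 0 [0,4,7,8,5,1,6,3,2])
(.n 4 (.s 2 8 (.p 0 [1,2,8,7,6,0,5,3,4])
(.s 2 9 (.p 1 [0,1,2,9,5,4,3,6,8,7])
(.n 2 (.s 6 9 (.p 2 [5,9,6,1,0,8,7])
(.s 6 10 (.p 1 [1,0,4,10,6,2,3,5,7,8])
(.n 6 (.s 7 3 (.p 2 [1,2,3,4,0,6,7])
(.s 7 10 (.p 5 [1,0,4,3,2,6,10,7])
(.s 7 11 (.p 4 [1,2,3,4,0,6,11,7])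
(.n 7 (.s 8 3 (.p 2 [0,4,3,2,1,5,8])
(.s 8 10 (.p 4 [0,4,3,2,1,5,10,8])
(.s 8 11 (.p 5 [0,1,2,3,4,5,11,8])
(.n 8 (.s 3 9 (.p 2 [0,4,3,2,1,5,9])
(.s 3 12 (.p 2 [1,2,3,4,0,6,12])
(.s 3 13 (.p 5 [1,2,3,4,0,6,13,7])
(.s 3 14 (.p 5 [0,4,3,2,1,5,14,8])
(.n 3 (.s 9 10 (.p 4 [0,4,3,2,1,5,10,9])
(.s 9 11 (.p 5 [0,1,2,3,4,5,11,9])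
(.s 9 13 (.p 5 [5,8,7,13,9,0,6,1])
(.s 9 15 (.p 5 [0,4,3,2,1,5,15,9])
(.s 9 12 (.n 9 (.s 12 10 (.p 5 [1,0,4,3,2,6,10,12])
(.s 12 11 (.p 4 [1,2,3,4,0,6,11,12])
(.s 12 14 (.p 2 [8,14,12,6,7,5,9])
(.s 12 15 (.p 5 [1,2,3,4,0,6,15,12])
(.n 12 (.s 15 13 (.s 13 10 (.p 4 [3,4,0,1,2,15,10,13])
(.s 13 11 (.p 4 [2,3,4,0,1,11,15,13])
(.s 13 16 (.k [15,0,4,1,2,3] [7] [16,9] [8,5] [12,6] [13])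
(.s 13 17 (.p 5 [7,6,12,17,13,8,9,5])
(.d 13)))))
(.s 15 14 (.s 15 16 (.k [0,4,1,2,3] [14,8] [16,9] [5] [12,7,6] [15])
(.s 15 17 (.k [0,4,1,2,3] [14,8] [17,12] [9,5] [7,6] [15])
(.d 15)))
(.s 15 16 (.s 13 10 (.k [2,0,1] [7] [9] [16,15,13,10,4,3] [8,5] [12,6])
(.s 13 11 (.k [0,1] [7] [9] [13,11,16,15,3,2] [8,5] [12,6])
(.s 13 16 (.k [15,0,4,1,2,3] [13,7] [9] [8,5] [12,6] [16])
(.s 13 17 (.p 5 [7,6,12,17,13,8,9,5])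
(.d 13)))))
(.s 15 17 (.d 15)
(.d 15)))))))))))
(.n 9 (.n 9 (.s 12 10 (.p 5 [1,0,4,3,2,6,10,12])
(.s 12 11 (.p 4 [1,2,3,4,0,6,11,12])
(.s 12 14 (.p 5 [6,7,8,14,12,1,5,0])
(.s 12 15 (.p 5 [1,2,3,4,0,6,15,12])
(.s 12 16 (.d 12)
(.s 12 17 (.d 12)
(.d 12))))))))))))))))))))))))))))))))))))

theorem chk6 : chk [pat0, pat1, pat2, pat3, pat4, pat5] cert6 pat6.1 pat6.2 [] = true := by decide +kernel

def pat7 : ℕ × List (ℕ × ℕ) := (5, [(0, 1), (1, 2), (2, 3), (3, 4), (0, 4)])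

def cert7 : Tr :=
(.n 0 (.n 1 (.n 2 (.n 3 (.n 4 (.s 5 7 (.p 2 [0,1,2,3,4,5,7])
(.s 5 8 (.p 2 [0,4,3,2,1,5,8])
(.n 5 (.n 5 (.s 7 9 (.p 2 [2,3,4,0,1,7,9])
(.s 7 10 (.p 5 [0,1,2,3,4,5,7,10])
(.s 7 11 (.p 5 [0,1,2,3,4,5,7,11])
(.n 7 (.n 7 (.s 8 6 (.p 2 [1,2,3,4,0,6,8])
(.s 8 10 (.p 5 [0,4,3,2,1,5,8,10])
(.s 8 11 (.p 5 [0,4,3,2,1,5,8,11])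
(.s 8 12 (.p 4 [2,3,4,0,1,7,8,12])
(.s 8 13 (.p 4 [2,3,4,0,1,7,8,13])
(.n 8 (.n 8 (.s 6 9 (.p 2 [1,0,4,3,2,6,9])
(.s 6 10 (.p 4 [0,1,2,3,4,5,6,10])
(.s 6 11 (.p 4 [0,1,2,3,4,5,6,11])
(.s 6 12 (.p 4 [1,2,3,4,0,6,7,12])
(.s 6 13 (.p 4 [1,2,3,4,0,6,7,13])
(.s 6 14 (.p 5 [1,2,3,4,0,6,8,14])
(.s 6 15 (.p 5 [1,2,3,4,0,6,8,15])
(.n 6 (.n 6 (.s 9 10 (.p 4 [0,4,3,2,1,5,9,10])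
(.s 9 11 (.p 4 [0,4,3,2,1,5,9,11])
(.s 9 12 (.p 5 [2,3,4,0,1,7,9,12])
(.s 9 13 (.p 5 [2,3,4,0,1,7,9,13])
(.s 9 14 (.p 4 [3,4,0,1,2,8,9,14])
(.s 9 15 (.p 4 [3,4,0,1,2,8,9,15])
(.s 9 16 (.p 5 [1,0,4,3,2,6,9,16])
(.s 9 17 (.p 5 [1,0,4,3,2,6,9,17])
(.d 9)))))))))))))))))))))))))))))))))))))))

theorem chk7 : chk [pat0, pat1, pat2, pat3, pat4, pat5, pat6] cert7 pat7.1 pat7.2 [] = true := by decide +kernel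


end CubicSearch


namespace CubicSearch

theorem no_cubic5 {V : Type*} [Fintype V] {G : SimpleGraph V} (hG : Cubic5 G)
    (hcard : Fintype.card V ≤ 18)
    (hK : ¬ (completeBipartiteGraph (Fin 3) (Fin 3)).IsMinorOf G) : Refuted G pat7 := by
  have r0 := refute hG hcard hK [] (by simp) cert0 pat0 chk0
  have r1 := refute hG hcard hK [pat0] (by simpa using r0) cert1 pat1 chk1
  have r2 := refute hG hcard hK [pat0, pat1] (by simpa using ⟨r0, r1⟩) cert2 pat2 chk2
  have r3 := refute hG hcard hK [pat0, pat1, pat2] (by simpa using ⟨r0, r1, r2⟩) cert3 pat3 chk3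
  have r4 := refute hG hcard hK [pat0, pat1, pat2, pat3] (by simpa using ⟨r0, r1, r2, r3⟩)
    cert4 pat4 chk4
  have r5 := refute hG hcard hK [pat0, pat1, pat2, pat3, pat4]
    (by simpa using ⟨r0, r1, r2, r3, r4⟩) cert5 pat5 chk5
  have r6 := refute hG hcard hK [pat0, pat1, pat2, pat3, pat4, pat5]
    (by simpa using ⟨r0, r1, r2, r3, r4, r5⟩) cert6 pat6 chk6
  exact refute hG hcard hK [pat0, pat1, pat2, pat3, pat4, pat5, pat6]
    (by simpa using ⟨r0, r1, r2, r3, r4, r5, r6⟩) cert7 pat7 chk7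

theorem cubic_girth_five {V : Type*} [Fintype V] {G : SimpleGraph V}
    (hreg : ∀ v, G.degN v = 3) (hg : G.girth = 5) (hcard : Fintype.card V ≤ 18)
    (hK : ¬ (completeBipartiteGraph (Fin 3) (Fin 3)).IsMinorOf G) : False := by
  have hG : Cubic5 G := ⟨hreg, GirthFacts.no_tri (by omega), GirthFacts.no_quad (by omega)⟩
  obtain ⟨a, w, hw, hl⟩ := GirthFacts.exists_cycle hg (by norm_num)
  obtain ⟨b, c, d, e, h1, h2, h3, h4, h5, hn⟩ := GirthFacts.of_cyc5 w hw hl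
  refine no_cubic5 hG hcard hK (fun i => [a, b, c, d, e].getD i a) ⟨?_, ?_, by simp⟩
  · intro i hi j hj hij
    have hi : i < [a, b, c, d, e].length := hi
    have hj : j < [a, b, c, d, e].length := hj
    simp only [List.getD_eq_getElem?_getD, List.getElem?_eq_getElem hi,
      List.getElem?_eq_getElem hj, Option.getD_some] at hij
    exact (hn.getElem_inj_iff).1 hij
  · intro p hp
    simp only [pat7, List.mem_cons, List.not_mem_nil, or_false] at hp
    rcases hp with rfl | rfl | rfl | rfl | rfl
    · exact ⟨by decide, by decide, h1⟩
    · exact ⟨by decide, by decide, h2⟩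
    · exact ⟨by decide, by decide, h3⟩
    · exact ⟨by decide, by decide, h4⟩
    · exact ⟨by decide, by decide, h5.symm⟩

end CubicSearch

/-! ### Lower bounds -/

namespace Lower

open Finset

variable {V : Type*} [Fintype V] {G : SimpleGraph V} {k : ℕ}

theorem handshake [DecidableEq V] [DecidableRel G.Adj] (h : ∀ v, G.degN v = k) :
    Fintype.card V * k = 2 * G.edgeFinset.card := by
  rw [← sum_degrees_eq_twice_card_edges,
    Finset.sum_congr rfl (fun v _ => (degN_eq G v).symm.trans (h v))]
  simp

theorem card_gt [DecidableEq V] [DecidableRel G.Adj] (h : ∀ v, G.degN v = k) (v : V) :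
    k < Fintype.card V := by
  rw [← h v, degN_eq]
  exact G.degree_lt_card_verts v

open Classical in
theorem low33 (h : ∀ v, G.degN v = 3) (hg : G.girth = 3) : 4 ≤ Fintype.card V := by
  obtain ⟨v, -⟩ := GirthFacts.exists_cycle hg (by norm_num)
  exact card_gt h v

open Classical in
theorem low43 (hP : G.IsPlanar) (h : ∀ v, G.degN v = 4) (hg : G.girth = 3) :
    6 ≤ Fintype.card V := by
  obtain ⟨v, -⟩ := GirthFacts.exists_cycle hg (by norm_num)
  have h5 := card_gt h v
  by_contra hlt
  have hs := handshake h
  exact Mader.mader G (by omega) (by omega) hP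

open Classical in
theorem low53 (hP : G.IsPlanar) (h : ∀ v, G.degN v = 5) (hg : G.girth = 3) :
    12 ≤ Fintype.card V := by
  obtain ⟨v, -⟩ := GirthFacts.exists_cycle hg (by norm_num)
  have h5 := card_gt h v
  by_contra hlt
  have hs := handshake h
  exact Mader.mader G (by omega) (by omega) hP

open Classical in
theorem low35 (hP : G.IsPlanar) (h : ∀ v, G.degN v = 3) (hg : G.girth = 5) :
    20 ≤ Fintype.card V := by
  by_contra hlt
  have hs := handshake h
  exact CubicSearch.cubic_girth_five h hg (by omega) hP.2

open Classical in
theorem low34 (hP : G.IsPlanar) (h : ∀ v, G.degN v = 3) (hg : G.girth = 4) :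
    8 ≤ Fintype.card V := by
  obtain ⟨v, -⟩ := GirthFacts.exists_cycle hg (by norm_num)
  by_contra hlt
  have hs := handshake h
  have ht := GirthFacts.no_tri (G := G) (by omega)
  have hN : ∀ x, (G.neighborFinset x).card = 3 := by
    intro x
    rw [card_neighborFinset_eq_degree, ← degN_eq, h]
  have hB := Finset.card_compl (G.neighborFinset v)
  rw [hN] at hB
  have hadj : ∀ a ∈ G.neighborFinset v, G.neighborFinset a = (G.neighborFinset v)ᶜ := by
    intro a ha
    refine Finset.eq_of_subset_of_card_le ?_ ?_
    · intro b hb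
      simp only [mem_neighborFinset, Finset.mem_compl] at ha hb ⊢
      exact fun hvb => ht v a b ha hb hvb.symm
    · rw [hB, hN]
      omega
  obtain ⟨a₀, ha₀⟩ : (G.neighborFinset v).Nonempty := Finset.card_pos.1 (by rw [hN]; norm_num)
  have hBc : ((G.neighborFinset v)ᶜ).card = 3 := by rw [← hadj a₀ ha₀, hN]
  let e := ((G.neighborFinset v).equivFinOfCardEq (hN v)).symm
  let e' := ((G.neighborFinset v)ᶜ.equivFinOfCardEq hBc).symm
  refine hP.2 (Mader.ModIn.isMinorOf (S := Set.univ)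
    (Mader.k33_mod (fun i => (e i).1) (fun i => (e' i).1) ?_ ?_ ?_ (by simp) (by simp)))
  · exact fun i j hij => e.injective (Subtype.ext hij)
  · exact fun i j hij => e'.injective (Subtype.ext hij)
  · intro i j
    have hx : ∀ y ∈ (G.neighborFinset v)ᶜ, G.Adj (e i).1 y := by
      intro y hy
      rw [← hadj _ (e i).2] at hy
      simpa using hy
    exact hx _ (e' j).2

end Lower

/-! ### Planarity from an exact face-edge-vertex complex over `ZMod 2` -/

namespace Emb

set_option linter.unusedSectionVars false

open Finset

variable {V E F : Type*} [Fintype V] [Fintype E] [Fintype F]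
  [DecidableEq V] [DecidableEq E] [DecidableEq F]

/-- The incidence coefficient of two (possibly equal) elements `a`, `b` with `x`. -/
def ic {X : Type*} [DecidableEq X] (a b x : X) : ZMod 2 :=
  (if a = x then 1 else 0) + (if b = x then 1 else 0)

/-- The boundary of a vector of edges. -/
def bd (s t : E → V) (z : E → ZMod 2) (x : V) : ZMod 2 := ∑ e, z e * ic (s e) (t e) x

/-- A combinatorial certificate of an embedding of a graph in the sphere: edges with ends `s`,
`t` and incident faces `l`, `r`, and a contraction `A`, `M` showing that every cycle is a
sum of faces. -/
structure Cert (G : SimpleGraph V) (s t : E → V) (l r : E → F) (A : E → F → ZMod 2)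
    (M : V → E → ZMod 2) : Prop where
  adj : ∀ x y, G.Adj x y → ∃ e, (s e = x ∧ t e = y) ∨ (s e = y ∧ t e = x)
  face : ∀ i x, ∑ e, ic (l e) (r e) i * ic (s e) (t e) x = 0
  exact : ∀ e e', (if e = e' then 1 else 0) =
    ∑ i, A e i * ic (l e') (r e') i + M (s e) e' + M (t e) e'

variable {G : SimpleGraph V} {s t : E → V} {l r : E → F} {A : E → F → ZMod 2}
  {M : V → E → ZMod 2}

theorem sum_ic {X : Type*} [DecidableEq X] [Fintype X] (d : X → ZMod 2) (a b : X) :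
    ∑ x, d x * ic a b x = d a + d b := by
  simp [ic, mul_add, Finset.sum_add_distrib]

theorem Cert.cycle (hC : Cert G s t l r A M) (z : E → ZMod 2) (hz : ∀ x, bd s t z x = 0) :
    ∃ c : F → ZMod 2, ∀ e, z e = c (l e) + c (r e) := by
  refine ⟨fun i => ∑ e, z e * A e i, fun e' => ?_⟩
  have h1 : z e' = ∑ e, z e * (if e = e' then 1 else 0) := by simp
  have h2 : ∑ e, z e * (M (s e) e' + M (t e) e') = 0 := by
    have : ∀ e, z e * (M (s e) e' + M (t e) e') = ∑ x, M x e' * (z e * ic (s e) (t e) x) := by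
      intro e
      rw [← sum_ic (fun x => M x e') (s e) (t e), Finset.mul_sum]
      exact Finset.sum_congr rfl fun x _ => by ring
    rw [Finset.sum_congr rfl fun e _ => this e, Finset.sum_comm]
    refine Finset.sum_eq_zero fun x _ => ?_
    rw [← Finset.mul_sum]
    have := hz x
    rw [bd] at this
    rw [this, mul_zero]
  rw [h1, ← sum_ic (fun i => ∑ e, z e * A e i)]
  simp only [hC.exact]
  have h3 : ∀ e, z e * (∑ i, A e i * ic (l e') (r e') i + M (s e) e' + M (t e) e') =
      ∑ i, z e * A e i * ic (l e') (r e') i + z e * (M (s e) e' + M (t e) e') := by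
    intro e
    rw [add_assoc, mul_add, Finset.mul_sum]
    congr 1
    exact Finset.sum_congr rfl fun x _ => by ring
  rw [Finset.sum_congr rfl fun e _ => h3 e, Finset.sum_add_distrib, h2, add_zero,
    Finset.sum_comm]
  exact Finset.sum_congr rfl fun i _ => by rw [Finset.sum_mul]

theorem Cert.face_sum (hC : Cert G s t l r A M) (d : F → ZMod 2) (x : V) :
    bd s t (fun e => d (l e) + d (r e)) x = 0 := by
  have h : ∀ e, (d (l e) + d (r e)) * ic (s e) (t e) x =
      ∑ i, d i * (ic (l e) (r e) i * ic (s e) (t e) x) := by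
    intro e
    rw [← sum_ic d, Finset.sum_mul]
    exact Finset.sum_congr rfl fun x _ => by ring
  rw [bd, Finset.sum_congr rfl fun e _ => h e, Finset.sum_comm]
  refine Finset.sum_eq_zero fun i _ => ?_
  rw [← Finset.mul_sum, hC.face, mul_zero]

theorem bd_add (z z' : E → ZMod 2) (x : V) :
    bd s t (fun e => z e + z' e) x = bd s t z x + bd s t z' x := by
  simp [bd, add_mul, Finset.sum_add_distrib]

theorem bd_single (e : E) (x : V) :
    bd s t (fun e' => if e = e' then 1 else 0) x = ic (s e) (t e) x := by
  simp [bd]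

theorem bd_lin {K : Type*} [Fintype K] (c : K → ZMod 2) (y : K → E → ZMod 2) (x : V) :
    bd s t (fun e => ∑ j, c j * y j e) x = ∑ j, c j * bd s t (y j) x := by
  simp only [bd, Finset.sum_mul, Finset.mul_sum]
  rw [Finset.sum_comm]
  exact Finset.sum_congr rfl fun i _ => Finset.sum_congr rfl fun e _ => by ring

theorem two_zero (a : ZMod 2) : a + a = 0 := CharTwo.add_self_eq_zero a

theorem ic_self {X : Type*} [DecidableEq X] (a x : X) : ic a a x = 0 := two_zero _

theorem ic_comm {X : Type*} [DecidableEq X] (a b x : X) : ic a b x = ic b a x := add_comm _ _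

theorem ic_trans {X : Type*} [DecidableEq X] (a b c x : X) : ic a b x + ic b c x = ic a c x := by
  unfold ic
  have := two_zero (if b = x then (1 : ZMod 2) else 0)
  linear_combination this

/-- Paths inside a connected set. -/
theorem Cert.path (hC : Cert G s t l r A M) {B : Set V} (hB : (G.induce B).Connected)
    {x y : V} (hx : x ∈ B) (hy : y ∈ B) : ∃ z : E → ZMod 2,
      (∀ e, z e ≠ 0 → s e ∈ B ∧ t e ∈ B) ∧ ∀ v, bd s t z v = ic x y v := by
  have key : ∀ a b : B, (G.induce B).Walk a b → ∃ z : E → ZMod 2,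
      (∀ e, z e ≠ 0 → s e ∈ B ∧ t e ∈ B) ∧ ∀ v, bd s t z v = ic a.1 b.1 v := by
    intro a b w
    induction w with
    | nil => exact ⟨fun _ => 0, by simp, fun v => by simp [bd, ic_self]⟩
    | @cons a b c h _ ih =>
      obtain ⟨z, hz, hz'⟩ := ih
      have h : G.Adj a.1 b.1 := h
      obtain ⟨e, he⟩ := hC.adj _ _ h
      refine ⟨fun e' => (if e = e' then 1 else 0) + z e', ?_, ?_⟩
      · intro e' he'
        by_cases hee : e = e'
        · subst hee
          rcases he with ⟨h1, h2⟩ | ⟨h1, h2⟩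
          · rw [h1, h2]; exact ⟨a.2, b.2⟩
          · rw [h1, h2]; exact ⟨b.2, a.2⟩
        · beta_reduce at he'
          rw [if_neg hee, zero_add] at he'
          exact hz e' he'
      · intro v
        rw [bd_add, bd_single, hz', ← ic_trans a.1 b.1 c.1]
        congr 1
        rcases he with ⟨h1, h2⟩ | ⟨h1, h2⟩
        · rw [h1, h2]
        · rw [h1, h2, ic_comm]
  obtain ⟨w⟩ := hB.preconnected ⟨x, hx⟩ ⟨y, hy⟩
  exact key _ _ w

/-- The main obstruction: a graph whose cycles are long compared with its number of edges
is not a minor. -/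
theorem Cert.no_minor (hC : Cert G s t l r A M) {W K : Type*} [Fintype W] [Fintype K]
    [DecidableEq W] [DecidableEq K] (H : SimpleGraph W) (a b : K → W)
    (hab : ∀ j, H.Adj (a j) (b j))
    (hinj : ∀ i j, (a i = a j ∧ b i = b j) ∨ (a i = b j ∧ b i = a j) → i = j)
    (d g : ℕ) (hd : d ≠ 0) (hdg : 2 * Fintype.card K < g * (d + 1))
    (hcyc : 2 ^ d ≤ (univ.filter fun z : K → ZMod 2 => ∀ w, bd a b z w = 0).card)
    (hsupp : ∀ z : K → ZMod 2, (∀ w, bd a b z w = 0) → z ≠ 0 →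
      g ≤ (univ.filter fun j => z j ≠ 0).card) : ¬ H.IsMinorOf G := by
  classical
  rintro ⟨f, hconn, hdisj, hedge⟩
  have huniq : ∀ {x w w'}, x ∈ f w → x ∈ f w' → w = w' := by
    intro x w w' hw hw'
    by_contra hne
    exact Set.disjoint_left.1 (hdisj hne) hw hw'
  -- representatives of the edges
  have hp : ∀ j, ∃ e, (s e ∈ f (a j) ∧ t e ∈ f (b j)) ∨ (s e ∈ f (b j) ∧ t e ∈ f (a j)) := by
    intro j
    obtain ⟨x, hx, y, hy, hxy⟩ := hedge (hab j)
    obtain ⟨e, ⟨h1, h2⟩ | ⟨h1, h2⟩⟩ := hC.adj x y hxy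
    · exact ⟨e, Or.inl ⟨h1 ▸ hx, h2 ▸ hy⟩⟩
    · exact ⟨e, Or.inr ⟨h1 ▸ hy, h2 ▸ hx⟩⟩
  choose p hp using hp
  have hpinj : Function.Injective p := by
    intro i j hij
    have h1 := hp i
    have h2 := hp j
    rw [← hij] at h2
    apply hinj
    rcases h1 with ⟨h1, h1'⟩ | ⟨h1, h1'⟩ <;> rcases h2 with ⟨h2, h2'⟩ | ⟨h2, h2'⟩
    · exact Or.inl ⟨huniq h1 h2, huniq h1' h2'⟩
    · exact Or.inr ⟨huniq h1 h2, huniq h1' h2'⟩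
    · exact Or.inr ⟨huniq h1' h2', huniq h1 h2⟩
    · exact Or.inl ⟨huniq h1' h2', huniq h1 h2⟩
  let Inn : E → Prop := fun e => ∃ w, s e ∈ f w ∧ t e ∈ f w
  have hpInn : ∀ j, ¬ Inn (p j) := by
    rintro j ⟨w, h1, h2⟩
    have hne := (hab j).ne
    rcases hp j with ⟨h3, h4⟩ | ⟨h3, h4⟩
    · exact hne ((huniq h3 h1).trans (huniq h2 h4))
    · exact hne ((huniq h4 h2).trans (huniq h1 h3))
  let S : E → Prop := fun e => Inn e ∨ ∃ j, p j = e
  -- classes of faces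
  let Q := Quot (fun i i' : F => ∃ e, ¬ S e ∧ l e = i ∧ r e = i')
  let q : F → Q := Quot.mk _
  have hq : ∀ e, ¬ S e → q (l e) = q (r e) := fun e he => Quot.sound ⟨e, he, rfl, rfl⟩
  have : Finite Q := Quot.finite _
  have : Fintype Q := Fintype.ofFinite Q
  let u : Q → E → ZMod 2 := fun C e => ic (q (l e)) (q (r e)) C
  let w : Q → K → ZMod 2 := fun C j => u C (p j)
  have hu0 : ∀ C e, ¬ S e → u C e = 0 := by
    intro C e he
    show ic (q (l e)) (q (r e)) C = 0
    rw [hq e he, ic_self]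
  have hubd : ∀ C x, bd s t (u C) x = 0 := fun C x =>
    hC.face_sum (fun i => if q i = C then 1 else 0) x
  -- the classes give cycles of `H`
  have hwcyc : ∀ C v, bd a b (w C) v = 0 := by
    intro C v
    have h0 : ∑ x, (if x ∈ f v then (1 : ZMod 2) else 0) * bd s t (u C) x = 0 :=
      Finset.sum_eq_zero fun x _ => by rw [hubd, mul_zero]
    have h1 : ∑ x, (if x ∈ f v then (1 : ZMod 2) else 0) * bd s t (u C) x =
        ∑ e, u C e * ((if s e ∈ f v then 1 else 0) + (if t e ∈ f v then 1 else 0)) := by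
      simp only [bd, Finset.mul_sum]
      rw [Finset.sum_comm]
      refine Finset.sum_congr rfl fun e _ => ?_
      rw [← sum_ic (fun x => if x ∈ f v then (1 : ZMod 2) else 0), Finset.mul_sum]
      exact Finset.sum_congr rfl fun x _ => by ring
    rw [h1] at h0
    rw [← h0, bd]
    refine Fintype.sum_of_injective p hpinj _ _ ?_ ?_
    · intro e he
      by_cases hin : Inn e
      · obtain ⟨w', k1, k2⟩ := hin
        by_cases hwv : w' = v
        · subst hwv
          rw [if_pos k1, if_pos k2, two_zero, mul_zero]
        · rw [if_neg (fun h => hwv (huniq k1 h)), if_neg (fun h => hwv (huniq k2 h)), add_zero,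
            mul_zero]
      · rw [hu0 C e, zero_mul]
        rintro (h | ⟨j, h⟩)
        · exact hin h
        · exact he ⟨j, h⟩
    · intro j
      have hiff : ∀ x w', x ∈ f w' → ((x ∈ f v) ↔ w' = v) := fun x w' hx =>
        ⟨fun h => huniq hx h, fun h => h ▸ hx⟩
      rcases hp j with ⟨h3, h4⟩ | ⟨h3, h4⟩
      · simp only [hiff _ _ h3, hiff _ _ h4]
        rfl
      · simp only [hiff _ _ h3, hiff _ _ h4]
        rw [add_comm]
        rfl
  let nz : Finset Q := univ.filter fun C => w C ≠ 0
  have hcount : nz.card * g ≤ 2 * Fintype.card K := by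
    have h1 : nz.card * g ≤ ∑ C, (univ.filter fun j => w C j ≠ 0).card := by
      rw [← smul_eq_mul, ← Finset.sum_const]
      refine le_trans (Finset.sum_le_sum (g := fun C => (univ.filter fun j => w C j ≠ 0).card)
        fun C hCn => ?_) (Finset.sum_le_sum_of_subset (Finset.subset_univ nz))
      exact hsupp (w C) (hwcyc C) (by simpa [nz] using hCn)
    have h2 : ∑ C, (univ.filter fun j => w C j ≠ 0).card =
        ∑ j, (univ.filter fun C => w C j ≠ 0).card := by
      simp only [Finset.card_filter]
      rw [Finset.sum_comm]
    have h3 : ∀ j, (univ.filter fun C => w C j ≠ 0).card ≤ 2 := by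
      intro j
      refine le_trans (Finset.card_le_card (t := {q (l (p j)), q (r (p j))}) ?_)
        Finset.card_le_two
      intro C hCj
      by_contra hnot
      simp only [Finset.mem_insert, Finset.mem_singleton, not_or] at hnot
      refine (Finset.mem_filter.1 hCj).2 ?_
      show ic (q (l (p j))) (q (r (p j))) C = 0
      rw [ic, if_neg (Ne.symm hnot.1), if_neg (Ne.symm hnot.2), add_zero]
    have h4 : ∑ j, (univ.filter fun C => w C j ≠ 0).card ≤ ∑ _j : K, 2 :=
      Finset.sum_le_sum fun j _ => h3 j
    rw [Finset.sum_const, Finset.card_univ, smul_eq_mul] at h4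
    omega
  have hnzd : nz.card ≤ d := by
    by_contra hlt
    have : (d + 1) * g ≤ nz.card * g := Nat.mul_le_mul_right g (by omega)
    rw [mul_comm g] at hdg
    omega
  have hnzsum : ∀ (c : Q → ZMod 2) j, ∑ C ∈ nz, c C * w C j = ∑ C, c C * w C j := by
    intro c j
    refine Finset.sum_subset (Finset.subset_univ _) fun C _ hCn => ?_
    have : w C = 0 := by simpa [nz] using hCn
    rw [this, Pi.zero_apply, mul_zero]
  have htot : ∀ j, ∑ C ∈ nz, w C j = 0 := by
    intro j
    have h1 := hnzsum (fun _ => 1) j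
    simp only [one_mul] at h1
    rw [h1]
    have h2 := sum_ic (fun _ : Q => (1 : ZMod 2)) (q (l (p j))) (q (r (p j)))
    simp only [one_mul] at h2
    exact h2.trans (two_zero 1)
  -- every cycle of `H` is a sum of classes
  have hne : ∀ v, ∃ x, x ∈ f v := fun v => by
    obtain ⟨⟨x, hx⟩⟩ := (hconn v).nonempty
    exact ⟨x, hx⟩
  choose ρ hρ using hne
  have hρinj : ∀ v v', ρ v = ρ v' → v = v' := fun v v' h => huniq (hρ v) (h ▸ hρ v')
  have hy : ∀ j, ∃ y : E → ZMod 2, (∀ e, y e ≠ 0 → Inn e) ∧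
      ∀ x, bd s t y x = ic (s (p j)) (t (p j)) x + ic (ρ (a j)) (ρ (b j)) x := by
    intro j
    have main : ∀ x y, x ∈ f (a j) → y ∈ f (b j) → ∃ z : E → ZMod 2, (∀ e, z e ≠ 0 → Inn e) ∧
        ∀ v, bd s t z v = ic x y v + ic (ρ (a j)) (ρ (b j)) v := by
      intro x y hx hy
      obtain ⟨z1, h1, h1'⟩ := hC.path (hconn (a j)) hx (hρ (a j))
      obtain ⟨z2, h2, h2'⟩ := hC.path (hconn (b j)) hy (hρ (b j))
      refine ⟨fun e => z1 e + z2 e, fun e he => ?_, fun v => ?_⟩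
      · by_cases hz : z1 e = 0
        · beta_reduce at he
          rw [hz, zero_add] at he
          exact ⟨_, h2 e he⟩
        · exact ⟨_, h1 e hz⟩
      · rw [bd_add, h1', h2']
        unfold ic
        ring
    rcases hp j with ⟨h3, h4⟩ | ⟨h3, h4⟩
    · exact main _ _ h3 h4
    · obtain ⟨z, h1, h2⟩ := main _ _ h4 h3
      exact ⟨z, h1, fun x => by rw [h2, ic_comm (t (p j))]⟩
  choose y hyI hy using hy
  have hspan : ∀ z' : K → ZMod 2, (∀ v, bd a b z' v = 0) →
      ∃ T ⊆ nz, ∀ j, z' j = ∑ C ∈ T, w C j := by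
    intro z' hz'
    let z : E → ZMod 2 := fun e => ∑ j, z' j * ((if p j = e then 1 else 0) + y j e)
    have hzp : ∀ j, z (p j) = z' j := by
      intro j
      have : ∀ i, y i (p j) = 0 := fun i => by
        by_contra h
        exact hpInn j (hyI i _ h)
      simp [z, this, hpinj.eq_iff]
    have hzS : ∀ e, ¬ S e → z e = 0 := by
      intro e he
      refine Finset.sum_eq_zero fun j _ => ?_
      have h1 : y j e = 0 := by
        by_contra h
        exact he (Or.inl (hyI j e h))
      rw [h1, if_neg (fun h => he (Or.inr ⟨j, h⟩)), add_zero, mul_zero]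
    have hzbd : ∀ x, bd s t z x = 0 := by
      intro x
      have h1 : bd s t z x = ∑ j, z' j * ic (ρ (a j)) (ρ (b j)) x := by
        show bd s t (fun e => ∑ j, z' j * ((if p j = e then 1 else 0) + y j e)) x = _
        rw [bd_lin z' (fun j e => (if p j = e then 1 else 0) + y j e)]
        refine Finset.sum_congr rfl fun j _ => ?_
        rw [bd_add, bd_single, hy, ← add_assoc, two_zero, zero_add]
      rw [h1]
      by_cases hx : ∃ v, ρ v = x
      · obtain ⟨v, rfl⟩ := hx
        rw [← hz' v, bd]
        refine Finset.sum_congr rfl fun j _ => ?_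
        have : ∀ v', ρ v' = ρ v ↔ v' = v := fun v' => ⟨hρinj _ _, fun h => by rw [h]⟩
        simp only [ic, this]
      · refine Finset.sum_eq_zero fun j _ => ?_
        rw [ic, if_neg (fun h => hx ⟨_, h⟩), if_neg (fun h => hx ⟨_, h⟩), add_zero, mul_zero]
    obtain ⟨c, hc⟩ := hC.cycle z hzbd
    have hresp : ∀ i i', (∃ e, ¬ S e ∧ l e = i ∧ r e = i') → c i = c i' := by
      rintro i i' ⟨e, he, rfl, rfl⟩
      have h1 := hc e
      rw [hzS e he] at h1
      exact (CharTwo.add_eq_zero.1 h1.symm)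
    let c' : Q → ZMod 2 := Quot.lift c hresp
    refine ⟨nz.filter fun C => c' C = 1, Finset.filter_subset _ _, fun j => ?_⟩
    have h1 : z' j = ∑ C, c' C * w C j := by
      rw [← hzp, hc]
      exact (sum_ic c' (q (l (p j))) (q (r (p j)))).symm
    rw [h1, ← hnzsum, Finset.sum_filter (s := nz) (fun C => c' C = 1) (fun C => w C j)]
    refine Finset.sum_congr rfl fun C _ => ?_
    have h01 : ∀ k : ZMod 2, k = 0 ∨ k = 1 := by decide
    rcases h01 (c' C) with h | h
    · rw [h, zero_mul, if_neg (by decide)]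
    · rw [h, one_mul, if_pos rfl]
  -- counting
  have hsub : (univ.filter fun z : K → ZMod 2 => ∀ w, bd a b z w = 0) ⊆
      (insert ∅ (nz.powerset.erase nz)).image (fun T j => ∑ C ∈ T, w C j) := by
    intro z' hz'
    obtain ⟨T, hT, hTz⟩ := hspan z' (Finset.mem_filter.1 hz').2
    refine Finset.mem_image.2 ?_
    by_cases hTn : T = nz
    · refine ⟨∅, Finset.mem_insert_self _ _, ?_⟩
      funext j
      rw [hTz j, hTn, htot j, Finset.sum_empty]
    · exact ⟨T, Finset.mem_insert_of_mem (Finset.mem_erase.2 ⟨hTn, Finset.mem_powerset.2 hT⟩),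
        funext fun j => (hTz j).symm⟩
  have h1 := (Finset.card_le_card hsub).trans Finset.card_image_le
  have h2 : 2 ^ nz.card ≤ 2 ^ d := Nat.pow_le_pow_right (by norm_num) hnzd
  have h3 : 1 < 2 ^ d := Nat.one_lt_two_pow hd
  have h4 : (insert ∅ (nz.powerset.erase nz)).card < 2 ^ d := by
    by_cases hnz : nz = ∅
    · rw [hnz]
      simpa using hd
    · rw [Finset.insert_eq_of_mem (Finset.mem_erase.2 ⟨Ne.symm hnz, by simp⟩),
        Finset.card_erase_of_mem (by simp), Finset.card_powerset]
      have := Nat.one_le_two_pow (n := nz.card)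
      omega
  omega

end Emb

/-! ### The solids are planar -/

namespace Emb

/-- A table of `ZMod 2`-vectors, each encoded in binary. -/
def bits {n k : ℕ} (c : Fin n → ℕ) (i : Fin n) (j : Fin k) : ZMod 2 :=
  if (c i).testBit j.1 then 1 else 0

theorem tet_cert : Cert (E := Fin 6) (F := Fin 4) tetrahedron
    ![0, 0, 0, 1, 1, 2]
    ![1, 2, 3, 2, 3, 3]
    ![0, 0, 1, 0, 1, 2]
    ![1, 2, 2, 3, 3, 3]
    (bits ![0, 0, 0, 14, 2, 4])
    (bits ![0, 1, 2, 4]) where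
  adj := by decide +kernel
  face := by decide +kernel
  exact := by decide +kernel

theorem cube_cert : Cert (E := Fin 12) (F := Fin 6) cubeGraph
    ![0, 0, 0, 1, 1, 2, 2, 3, 4, 4, 5, 6]
    ![1, 2, 4, 3, 5, 3, 6, 7, 5, 6, 7, 7]
    ![0, 0, 1, 0, 1, 0, 2, 3, 1, 2, 3, 4]
    ![1, 2, 2, 3, 3, 4, 4, 4, 5, 5, 5, 5]
    (bits ![0, 0, 0, 0, 0, 62, 0, 0, 2, 4, 8, 46])
    (bits ![0, 1, 2, 9, 4, 17, 66, 137]) where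
  adj := by decide +kernel
  face := by decide +kernel
  exact := by decide +kernel

theorem oct_cert : Cert (E := Fin 12) (F := Fin 8) octahedron
    ![0, 0, 0, 0, 1, 1, 1, 2, 2, 3, 3, 4]
    ![1, 2, 4, 5, 2, 3, 5, 3, 4, 4, 5, 5]
    ![0, 0, 2, 1, 0, 4, 1, 4, 2, 6, 5, 3]
    ![1, 2, 3, 3, 4, 5, 5, 6, 6, 7, 7, 7]
    (bits ![0, 0, 0, 0, 254, 0, 2, 238, 4, 170, 34, 8])
    (bits ![0, 1, 2, 33, 4, 8]) where
  adj := by decide +kernel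
  face := by decide +kernel
  exact := by decide +kernel

theorem dod_cert : Cert (E := Fin 30) (F := Fin 12) dodecahedron
    ![0, 0, 0, 1, 1, 2, 2, 3, 3, 4, 4, 5, 5, 6, 6, 7, 7, 8, 8, 9, 10, 10, 11, 11, 12, 13, 14, 15,
    16, 17]
    ![1, 9, 10, 2, 11, 3, 12, 4, 13, 5, 14, 6, 15, 7, 16, 8, 17, 9, 18, 19, 12, 18, 13, 19, 14,
    15, 16, 17, 18, 19]
    ![0, 0, 1, 1, 0, 3, 1, 4, 3, 5, 4, 6, 5, 7, 6, 8, 7, 2, 2, 0, 1, 2, 3, 0, 4, 5, 6, 7, 8, 9]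
    ![1, 2, 2, 3, 3, 4, 4, 5, 5, 6, 6, 7, 7, 8, 8, 9, 9, 9, 8, 9, 10, 10, 11, 11, 10, 11, 10, 11,
    10, 11]
    (bits ![0, 0, 0, 0, 0, 0, 2, 0, 8, 0, 18, 1366, 40, 0, 260, 0, 512, 0, 4, 0, 0, 0, 0, 4094, 0,
    0, 1024, 2046, 0, 0])
    (bits ![0, 1, 9, 41, 169, 681, 172034, 163842, 131074, 2, 4, 17, 1048580, 4194321, 17825796,
    37748753, 270532612, 537395202, 2097156, 524290]) where
  adj := by decide +kernel
  face := by decide +kernel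
  exact := by decide +kernel

theorem ico_cert : Cert (E := Fin 30) (F := Fin 20) icosahedron
    ![0, 0, 0, 0, 0, 1, 1, 1, 1, 2, 2, 2, 3, 3, 3, 4, 4, 4, 5, 5, 6, 6, 6, 7, 7, 8, 8, 9, 9, 10]
    ![1, 2, 3, 4, 5, 2, 5, 6, 7, 3, 7, 8, 4, 8, 9, 5, 9, 10, 6, 10, 7, 10, 11, 8, 11, 9, 11, 10,
    11, 11]
    ![0, 0, 2, 3, 1, 0, 1, 6, 5, 2, 5, 8, 3, 8, 10, 4, 10, 12, 6, 12, 7, 14, 15, 9, 15, 11, 17,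
    13, 18, 16]
    ![1, 2, 3, 4, 4, 5, 6, 7, 7, 8, 9, 9, 10, 11, 11, 12, 13, 13, 14, 14, 15, 16, 16, 17, 17, 18,
    18, 19, 19, 19]
    (bits ![0, 0, 0, 0, 0, 1048574, 2, 0, 0, 4, 1048542, 0, 8, 260, 0, 16, 1032, 0, 66, 4112, 128,
    20562, 0, 1048030, 32896, 2308, 884062, 9224, 619610, 86098])
    (bits ![0, 1, 2, 4, 8, 16, 129, 257, 2050, 16388, 131080, 4194433]) where
  adj := by decide +kernel
  face := by decide +kernel
  exact := by decide +kernel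

theorem Cert.planar {V E F : Type*} [Fintype V] [Fintype E] [Fintype F]
    [DecidableEq V] [DecidableEq E] [DecidableEq F] {G : SimpleGraph V} {s t : E → V}
    {l r : E → F} {A : E → F → ZMod 2} {M : V → E → ZMod 2} (hC : Cert G s t l r A M) :
    G.IsPlanar := by
  constructor
  · exact hC.no_minor (K := Fin 10) _ ![0, 0, 0, 0, 1, 1, 1, 2, 2, 3] ![1, 2, 3, 4, 2, 3, 4, 3, 4, 4]
      (by simp only [completeGraph_eq_top, top_adj]; decide +kernel) (by decide +kernel) 6 3
      (by decide) (by decide) (by decide +kernel) (by decide +kernel)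
  · exact hC.no_minor (K := Fin 9) _ (fun j => Sum.inl ((![0, 0, 0, 1, 1, 1, 2, 2, 2] : Fin 9 → Fin 3) j))
      (fun j => Sum.inr ((![0, 1, 2, 0, 1, 2, 0, 1, 2] : Fin 9 → Fin 3) j))
      (by simp) (by decide +kernel) 4 4
      (by decide) (by decide) (by decide +kernel) (by decide +kernel)

end Emb

theorem planar_tet : tetrahedron.IsPlanar := Emb.tet_cert.planar

theorem planar_cube : cubeGraph.IsPlanar := Emb.cube_cert.planar

theorem planar_dod : dodecahedron.IsPlanar := Emb.dod_cert.planar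

theorem planar_oct : octahedron.IsPlanar := Emb.oct_cert.planar

theorem planar_ico : icosahedron.IsPlanar := Emb.ico_cert.planar


/-- The minimum order of a finite planar `k`-regular graph of girth `g`
is `4, 8, 20, 6, 12` for `(k,g) = (3,3), (3,4), (3,5), (4,3), (5,3)` respectively,
attained by the tetrahedron, the cube, the dodecahedron, the octahedron and the
icosahedron. -/
theorem planar_regular_cages :
    (IsLeast (regOrders 3 3) 4 ∧ IsLeast (regOrders 3 4) 8 ∧ IsLeast (regOrders 3 5) 20 ∧
      IsLeast (regOrders 4 3) 6 ∧ IsLeast (regOrders 5 3) 12) ∧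
    (tetrahedron.IsPlanar ∧ (∀ v, tetrahedron.degN v = 3) ∧ tetrahedron.girth = 3 ∧
      Fintype.card (Fin 4) = 4) ∧
    (cubeGraph.IsPlanar ∧ (∀ v, cubeGraph.degN v = 3) ∧ cubeGraph.girth = 4 ∧
      Fintype.card (Fin 8) = 8) ∧
    (dodecahedron.IsPlanar ∧ (∀ v, dodecahedron.degN v = 3) ∧ dodecahedron.girth = 5 ∧
      Fintype.card (Fin 20) = 20) ∧
    (octahedron.IsPlanar ∧ (∀ v, octahedron.degN v = 4) ∧ octahedron.girth = 3 ∧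
      Fintype.card (Fin 6) = 6) ∧
    (icosahedron.IsPlanar ∧ (∀ v, icosahedron.degN v = 5) ∧ icosahedron.girth = 3 ∧
      Fintype.card (Fin 12) = 12) := by
  refine ⟨⟨⟨?_, ?_⟩, ⟨?_, ?_⟩, ⟨?_, ?_⟩, ⟨?_, ?_⟩, ⟨?_, ?_⟩⟩,
    ⟨planar_tet, tet_deg, tet_girth, rfl⟩, ⟨planar_cube, cube_deg, cube_girth, rfl⟩,
    ⟨planar_dod, dod_deg, dod_girth, rfl⟩, ⟨planar_oct, oct_deg, oct_girth, rfl⟩,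
    ⟨planar_ico, ico_deg, ico_girth, rfl⟩⟩
  · exact ⟨Fin 4, inferInstance, _, planar_tet, tet_deg, tet_girth, rfl⟩
  · rintro n ⟨V, _, G, hP, hd, hg, rfl⟩
    exact Lower.low33 hd hg
  · exact ⟨Fin 8, inferInstance, _, planar_cube, cube_deg, cube_girth, rfl⟩
  · rintro n ⟨V, _, G, hP, hd, hg, rfl⟩
    exact Lower.low34 hP hd hg
  · exact ⟨Fin 20, inferInstance, _, planar_dod, dod_deg, dod_girth, rfl⟩
  · rintro n ⟨V, _, G, hP, hd, hg, rfl⟩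
    exact Lower.low35 hP hd hg
  · exact ⟨Fin 6, inferInstance, _, planar_oct, oct_deg, oct_girth, rfl⟩
  · rintro n ⟨V, _, G, hP, hd, hg, rfl⟩
    exact Lower.low43 hP hd hg
  · exact ⟨Fin 12, inferInstance, _, planar_ico, ico_deg, ico_girth, rfl⟩
  · rintro n ⟨V, _, G, hP, hd, hg, rfl⟩
    exact Lower.low53 hP hd hg
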